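/- Let Σ_A(ℕ) be a topologically mixing, finitely primitive (BIP) countable Markov shift, f : Σ_A(ℕ) → ℝ satisfying the Walters condition with Var_1 f < ∞ and P(f) < ∞, admitting a unique maximizing measure, and for β > 1 let μ_β be the Gibbs measure of βf. Then for every x = (x_0, x_1, x_2, …) ∈ Σ_A(ℕ): lim_{n→∞} lim_{β→∞} (1/β) log ( μ_β([x_1 … x_n]) / μ_β([x_0 … x_n]) ) = R_+(x), where R_+ = −f − V + V∘σ + m(f) for a bounded calibrated sub-action V. -/

import Mathlib

open Filter Topology MeasureTheory
open scoped ENNReal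

/-- The countable Markov shift over alphabet ℕ determined by the 0-1 matrix `A`. -/
def MarkovShift (A : ℕ → ℕ → Bool) : Type :=
  {x : ℕ → ℕ // ∀ i, A (x i) (x (i + 1)) = true}

namespace MarkovShift

variable {A : ℕ → ℕ → Bool}

instance : TopologicalSpace (MarkovShift A) :=
  instTopologicalSpaceSubtype

instance : MeasurableSpace (MarkovShift A) := borel _

instance : BorelSpace (MarkovShift A) := ⟨rfl⟩

/-- The shift map. -/
def shift (x : MarkovShift A) : MarkovShift A :=
  ⟨fun n => x.1 (n + 1), fun i => x.2 (i + 1)⟩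

/-- The cylinder set determined by a finite word. -/
def cylinder (w : List ℕ) : Set (MarkovShift A) :=
  {x | ∀ i : Fin w.length, x.1 i = w.get i}

/-- The cylinder set determined by the first `m` coordinates of `x`. -/
def cylOf (x : MarkovShift A) (m : ℕ) : Set (MarkovShift A) :=
  {y | ∀ i < m, y.1 i = x.1 i}

/-- A symbol is admissible when its cylinder is nonempty. -/
def Admissible (A : ℕ → ℕ → Bool) (a : ℕ) : Prop :=
  ∃ x : MarkovShift A, x.1 0 = a

/-- Topologically mixing. -/
def TopologicallyMixing (A : ℕ → ℕ → Bool) : Prop :=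
  ∀ a b : ℕ, Admissible A a → Admissible A b →
    ∃ N : ℕ, ∀ n ≥ N, ∃ x : MarkovShift A, x.1 0 = a ∧ (shift^[n] x).1 0 = b

/-- Finitely primitive (BIP). -/
def FinitelyPrimitive (A : ℕ → ℕ → Bool) : Prop :=
  ∃ (K₀ : ℕ) (F : Finset ℕ), ∀ a b : ℕ, Admissible A a → Admissible A b →
    ∃ w : List ℕ, w.length = K₀ ∧ (∀ c ∈ w, c ∈ F) ∧
      List.Chain' (fun u v => A u v = true) (a :: (w ++ [b]))

/-- First coordinate where two distinct points disagree. -/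
noncomputable def firstDiff (x y : MarkovShift A) (h : x ≠ y) : ℕ :=
  Nat.find (Function.ne_iff.mp (fun hxy : x.1 = y.1 => h (Subtype.ext hxy)))

open Classical in
/-- The metric `d(x,y) = r^{t(x,y)}`. -/
noncomputable def dist' (r : ℝ) (x y : MarkovShift A) : ℝ :=
  if h : x = y then 0 else r ^ firstDiff x y h

/-- Birkhoff sum `S_n f`. -/
def birkhoff (f : MarkovShift A → ℝ) (n : ℕ) (x : MarkovShift A) : ℝ :=
  ∑ j ∈ Finset.range n, f (shift^[j] x)

/-- The set of values `|S_n f x - S_n f y|` over pairs agreeing on the first `m` coordinates. -/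
def varSet (f : MarkovShift A → ℝ) (n m : ℕ) : Set ℝ :=
  {c | ∃ x y : MarkovShift A, (∀ i < m, x.1 i = y.1 i) ∧ c = |birkhoff f n x - birkhoff f n y|}

/-- `Var_m (S_n f)`. -/
noncomputable def varBirk (f : MarkovShift A → ℝ) (n m : ℕ) : ℝ := sSup (varSet f n m)

/-- `Var_1 f < ∞`. -/
def Var1Finite (f : MarkovShift A → ℝ) : Prop := BddAbove (varSet f 1 1)

/-- The set whose supremum is `sup_{n ≥ 1} Var_{n+k}(S_n f)`. -/
def waltersSet (f : MarkovShift A → ℝ) (k : ℕ) : Set ℝ :=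
  {c | ∃ n, 1 ≤ n ∧ c ∈ varSet f n (n + k)}

/-- `M_k = sup_{n ≥ 1} Var_{n+k}(S_n f)`. -/
noncomputable def waltersSup (f : MarkovShift A → ℝ) (k : ℕ) : ℝ := sSup (waltersSet f k)

/-- The Walters condition. -/
def SatisfiesWalters (f : MarkovShift A → ℝ) : Prop :=
  (∀ k, 1 ≤ k → BddAbove (waltersSet f k)) ∧
    Tendsto (fun k => waltersSup f k) atTop (𝓝 0)

/-- The partition function `Z_n(f,a) = Σ_{σ^n x = x, x₀ = a} e^{S_n f (x)}`. -/
noncomputable def partitionSum (f : MarkovShift A → ℝ) (n : ℕ) (a : ℕ) : ℝ :=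
  ∑' x : {x : MarkovShift A // shift^[n] x = x ∧ x.1 0 = a}, Real.exp (birkhoff f n x.1)

/-- `f` has (finite) Gurevich pressure `p`. -/
def HasGurevichPressure (f : MarkovShift A → ℝ) (p : ℝ) : Prop :=
  ∀ a : ℕ, Admissible A a →
    (∀ n, 1 ≤ n → Summable fun x : {x : MarkovShift A // shift^[n] x = x ∧ x.1 0 = a} =>
        Real.exp (birkhoff f n x.1)) ∧
    Tendsto (fun n : ℕ => (1 / (n : ℝ)) * Real.log (partitionSum f n a)) atTop (𝓝 p)

/-- σ-invariant Borel probability measure. -/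
def IsInvariantProb (μ : Measure (MarkovShift A)) : Prop :=
  IsProbabilityMeasure μ ∧ μ.map shift = μ

/-- `m(f)`, the maximal ergodic average. -/
noncomputable def mf (f : MarkovShift A → ℝ) : ℝ :=
  sSup {c | ∃ μ : Measure (MarkovShift A),
    IsInvariantProb μ ∧ Integrable f μ ∧ ∫ x, f x ∂μ = c}

/-- A maximizing measure for `f`. -/
def IsMaximizing (f : MarkovShift A → ℝ) (μ : Measure (MarkovShift A)) : Prop :=
  IsInvariantProb μ ∧ Integrable f μ ∧ ∫ x, f x ∂μ = mf f

/-- Bounded real valued function. -/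
def BoundedFun (g : MarkovShift A → ℝ) : Prop := ∃ C, ∀ x, |g x| ≤ C

/-- A bounded calibrated sub-action for `f`. -/
def IsCalibratedSubaction (f V : MarkovShift A → ℝ) : Prop :=
  Continuous V ∧ BoundedFun V ∧
    (∀ x, f x + V x - V (shift x) - mf f ≤ 0) ∧
    (∀ y, ∃ x, shift x = y ∧ f x + V x - V (shift x) - mf f = 0)

/-- The Ruelle transfer operator `(L_g u)(x) = Σ_{σ y = x} e^{g(y)} u(y)`. -/
noncomputable def ruelle (g u : MarkovShift A → ℝ) (x : MarkovShift A) : ℝ :=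
  ∑' y : {y : MarkovShift A // shift y = x}, Real.exp (g y.1) * u y.1

/-- Ruelle-Perron-Frobenius data for the potential `f` with pressure `p`:
eigenfunction `h`, eigenmeasure `ν`. -/
def IsRPF (f : MarkovShift A → ℝ) (p : ℝ) (h : MarkovShift A → ℝ)
    (ν : Measure (MarkovShift A)) : Prop :=
  Continuous h ∧ (∀ x, 0 < h x) ∧
    (∀ x, ruelle f h x = Real.exp p * h x) ∧
    IsProbabilityMeasure ν ∧
    (∀ g : MarkovShift A → ℝ, Continuous g → BoundedFun g →
      ∫ x, ruelle f g x ∂ν = Real.exp p * ∫ x, g x ∂ν) ∧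
    ∫ x, h x ∂ν = 1

/-- The Gibbs measure `dμ = h dν`. -/
noncomputable def gibbs (h : MarkovShift A → ℝ) (ν : Measure (MarkovShift A)) :
    Measure (MarkovShift A) :=
  ν.withDensity fun x => ENNReal.ofReal (h x)

/-- The Mañé potential `S_f(x,y)` (with respect to the metric of parameter `r`). -/
noncomputable def manePot (r : ℝ) (f : MarkovShift A → ℝ) (x y : MarkovShift A) : EReal :=
  ⨅ ε : {ε : ℝ // 0 < ε}, ⨆ n : {n : ℕ // 1 ≤ n},
    ⨆ _z : {z : MarkovShift A // dist' r x z < ε.1 ∧ shift^[n.1] z = y},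
      ((birkhoff (fun w => f w - mf f) n.1 _z.1 : ℝ) : EReal)

/-- The (topological) support of a measure. -/
def msupport (μ : Measure (MarkovShift A)) : Set (MarkovShift A) :=
  {x | ∀ U : Set (MarkovShift A), IsOpen U → x ∈ U → 0 < μ U}

end MarkovShift

/-!
With `W_β = (1/β) log h_β`, the potential `βf` is cohomologous, up to a constant, to `-βR_β` where
`R_β = -f - W_β + W_β ∘ σ + P(βf)/β ≥ 0`. The Ruelle operator of `-βR_β` fixes the constant `1` and
its dual fixes the Gibbs measure `μ_β`, which is therefore invariant. The `W_β` have uniformly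
bounded oscillation and a common modulus of continuity, and every limit point of them is a
calibrated sub-action, hence equal to `V` up to a constant because the maximizing measure is unique;
so `R_β → R₊` as `β → ∞`.

Fix `c₀` in the support of the maximizing measure. Every orbit along which `R₊` vanishes visits each
neighbourhood of `c₀`, so cylinders around `c₀` have subexponential decay in `β`, and for any
cylinder `C` the quantity `(1/β) log μ_β(C)` converges to minus the least `R₊`-cost of going from
`C` to `c₀`. Conformality puts `(1/β) log (μ_β[x₁ … x_n] / μ_β[x₀ … x_n])` within the oscillation of
`R_β` over `[x₀ … x_n]` of `R_β(x)`, uniformly in `β`; let first `β → ∞` and then `n → ∞`.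
-/

namespace MarkovShift

variable {A : ℕ → ℕ → Bool}

section Topology

lemma isEmbedding_val : IsEmbedding (fun x : MarkovShift A ↦ x.1) := IsEmbedding.subtypeVal

instance : SecondCountableTopology (MarkovShift A) := isEmbedding_val.secondCountableTopology

instance : TopologicalSpace.MetrizableSpace (MarkovShift A) := isEmbedding_val.metrizableSpace

lemma ext {x y : MarkovShift A} (h : ∀ i, x.1 i = y.1 i) : x = y := Subtype.ext (funext h)

lemma shift_iterate_val (n : ℕ) (x : MarkovShift A) (i : ℕ) :
    (shift^[n] x).1 i = x.1 (i + n) := by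
  induction n generalizing x with
  | zero => rfl
  | succ n ih =>
    rw [Function.iterate_succ_apply, ih]
    exact congrArg x.1 (by omega)

lemma shift_iterate_val_zero (n : ℕ) (x : MarkovShift A) : (shift^[n] x).1 0 = x.1 n := by
  rw [shift_iterate_val, zero_add]

lemma admissible_val (x : MarkovShift A) (n : ℕ) : Admissible A (x.1 n) :=
  ⟨shift^[n] x, shift_iterate_val_zero n x⟩

lemma continuous_val_apply (i : ℕ) : Continuous fun x : MarkovShift A ↦ x.1 i :=
  (continuous_apply i).comp continuous_subtype_val

lemma continuous_shift : Continuous (shift : MarkovShift A → MarkovShift A) :=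
  Continuous.subtype_mk (continuous_pi fun i ↦ continuous_val_apply (i + 1)) _

lemma tendsto_nhds_iff_eventually_val_eq {ι : Type*} {l : Filter ι} {z : ι → MarkovShift A}
    {x : MarkovShift A} : Tendsto z l (𝓝 x) ↔ ∀ j, ∀ᶠ i in l, (z i).1 j = x.1 j := by
  rw [isEmbedding_val.tendsto_nhds_iff, tendsto_pi_nhds]
  simp [nhds_discrete]

lemma mem_cylOf_self (x : MarkovShift A) (n : ℕ) : x ∈ cylOf x n := fun _ _ ↦ rfl

lemma cylOf_eq_of_mem {x y : MarkovShift A} {n : ℕ} (h : y ∈ cylOf x n) :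
    cylOf y n = cylOf x n := by
  ext z
  exact ⟨fun hz i hi ↦ (hz i hi).trans (h i hi), fun hz i hi ↦ (hz i hi).trans (h i hi).symm⟩

lemma cylOf_anti (x : MarkovShift A) : Antitone (cylOf x) :=
  fun _ _ hmn _ hy i hi ↦ hy i (hi.trans_le hmn)

lemma mem_cylOf_one {x y : MarkovShift A} : y ∈ cylOf x 1 ↔ y.1 0 = x.1 0 := by
  simp [cylOf]

lemma shift_iterate_mem_cylOf {x y : MarkovShift A} {k n : ℕ} (h : y ∈ cylOf x (k + n)) :
    shift^[k] y ∈ cylOf (shift^[k] x) n := by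
  intro i hi
  rw [shift_iterate_val, shift_iterate_val]
  exact h _ (by omega)

lemma mem_cylOf_add {x y : MarkovShift A} {k n : ℕ} (h : y ∈ cylOf x k)
    (h' : shift^[k] y ∈ cylOf (shift^[k] x) n) : y ∈ cylOf x (k + n) := by
  intro i hi
  rcases lt_or_ge i k with hik | hik
  · exact h i hik
  · simpa [shift_iterate_val, Nat.sub_add_cancel hik] using h' (i - k) (by omega)

lemma eq_of_mem_cylOf_of_shift_iterate_eq {x y : MarkovShift A} {n : ℕ} (h : y ∈ cylOf x n)
    (h' : shift^[n] y = shift^[n] x) : y = x :=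
  ext fun i ↦ mem_cylOf_add (n := i + 1) h (h' ▸ mem_cylOf_self _ _) i (by omega)

lemma isClopen_cylOf (x : MarkovShift A) (n : ℕ) : IsClopen (cylOf x n) := by
  have : cylOf x n = ⋂ i ∈ Finset.range n, {y : MarkovShift A | y.1 i = x.1 i} := by
    ext y; simp [cylOf]
  rw [this]
  exact isClopen_biInter_finset fun i _ ↦
    (isClopen_discrete ({x.1 i} : Set ℕ)).preimage (continuous_val_apply i)

lemma measurableSet_cylOf (x : MarkovShift A) (n : ℕ) : MeasurableSet (cylOf x n) :=
  (isClopen_cylOf x n).isOpen.measurableSet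

lemma cylOf_mem_nhds (x : MarkovShift A) (n : ℕ) : cylOf x n ∈ 𝓝 x :=
  (isClopen_cylOf x n).isOpen.mem_nhds (mem_cylOf_self x n)

lemma hasBasis_nhds (x : MarkovShift A) :
    (𝓝 x).HasBasis (fun _ : ℕ ↦ True) fun n ↦ cylOf x (n + 1) := by
  refine ⟨fun U ↦ ⟨fun hU ↦ ?_, fun ⟨n, _, hn⟩ ↦ mem_of_superset (cylOf_mem_nhds x _) hn⟩⟩
  by_contra! hcon
  simp only [Set.not_subset, forall_const] at hcon
  choose z hz hzU using hcon
  have hlim : Tendsto z atTop (𝓝 x) := tendsto_nhds_iff_eventually_val_eq.2 fun j ↦ by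
    filter_upwards [eventually_ge_atTop j] with n hn using hz n j (by omega)
  obtain ⟨n, hn⟩ := (hlim.eventually hU).exists
  exact hzU n hn

/-- The family of cylinders of positive length. -/
def cylinders (A : ℕ → ℕ → Bool) : Set (Set (MarkovShift A)) :=
  {s | ∃ x n, s = cylOf x (n + 1)}

lemma isTopologicalBasis_cylinders : TopologicalSpace.IsTopologicalBasis (cylinders A) := by
  refine TopologicalSpace.isTopologicalBasis_of_isOpen_of_nhds ?_ fun x U hx hU ↦ ?_
  · rintro _ ⟨x, n, rfl⟩
    exact (isClopen_cylOf x _).isOpen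
  · obtain ⟨n, -, hn⟩ := (hasBasis_nhds x).mem_iff.1 (hU.mem_nhds hx)
    exact ⟨_, ⟨x, n, rfl⟩, mem_cylOf_self _ _, hn⟩

lemma isPiSystem_cylinders : IsPiSystem (cylinders A) := by
  rintro _ ⟨x, n, rfl⟩ _ ⟨y, m, rfl⟩ ⟨z, hzx, hzy⟩
  rw [← cylOf_eq_of_mem hzx, ← cylOf_eq_of_mem hzy]
  rcases le_total n m with h | h
  · exact ⟨z, m, Set.inter_eq_right.2 (cylOf_anti z (by omega))⟩
  · exact ⟨z, n, Set.inter_eq_left.2 (cylOf_anti z (by omega))⟩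

lemma measure_ext_of_cylOf {μ ν : Measure (MarkovShift A)} [IsFiniteMeasure μ]
    (h : ∀ x n, μ (cylOf x (n + 1)) = ν (cylOf x (n + 1))) : μ = ν := by
  refine Measure.ext_of_generateFrom_of_cover_subset
    (S := cylinders A) (T := Set.range fun x ↦ cylOf x 1)
    isTopologicalBasis_cylinders.borel_eq_generateFrom isPiSystem_cylinders ?_ ?_ ?_ ?_ ?_
  · rintro _ ⟨x, rfl⟩
    exact ⟨x, 0, rfl⟩
  · refine (Set.countable_range fun a : ℕ ↦ {y : MarkovShift A | y.1 0 = a}).mono ?_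
    rintro _ ⟨x, rfl⟩
    exact ⟨x.1 0, Set.ext fun y ↦ mem_cylOf_one.symm⟩
  · exact Set.eq_univ_of_forall fun x ↦ ⟨_, ⟨x, rfl⟩, mem_cylOf_self _ _⟩
  · exact fun _ _ ↦ measure_ne_top μ _
  · rintro _ ⟨x, n, rfl⟩
    exact h x n

lemma exists_measure_cylOf_one_ne_zero (μ : Measure (MarkovShift A)) [IsProbabilityMeasure μ] :
    ∃ x, μ (cylOf x 1) ≠ 0 := by
  by_contra! hcon
  refine IsProbabilityMeasure.ne_zero μ (measure_ext_of_cylOf fun x n ↦ ?_)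
  exact measure_mono_null (cylOf_anti x (by omega)) (hcon x)

lemma exists_mem_msupport (μ : Measure (MarkovShift A)) [IsProbabilityMeasure μ] :
    ∃ x, x ∈ msupport μ := by
  by_contra! hcon
  simp only [msupport, Set.mem_ofPred_eq, not_forall, not_lt, nonpos_iff_eq_zero] at hcon
  have hnull : μ Set.univ = 0 := measure_null_of_locally_null _ fun x _ ↦ by
    obtain ⟨U, hU, hxU, hU0⟩ := hcon x
    exact ⟨U, mem_nhdsWithin_of_mem_nhds (hU.mem_nhds hxU), hU0⟩
  simp at hnull

lemma exists_tendsto_of_eventually_val_mem_finite {ι : Type*} (l : Ultrafilter ι)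
    (z : ι → MarkovShift A)
    (h : ∀ j, ∃ G : Set ℕ, G.Finite ∧ ∀ᶠ i in (l : Filter ι), (z i).1 j ∈ G) :
    ∃ x, Tendsto z l (𝓝 x) := by
  have hconst : ∀ j, ∃ a, ∀ᶠ i in (l : Filter ι), (z i).1 j = a := by
    intro j
    obtain ⟨G, hG, hev⟩ := h j
    obtain ⟨a, -, ha⟩ := (Ultrafilter.finite_biUnion_mem_iff hG (f := l)
      (s := fun a ↦ {i | (z i).1 j = a})).1 (by filter_upwards [hev] with i hi; simpa using hi)
    exact ⟨a, ha⟩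
  choose x hx using hconst
  have hadm : ∀ i, A (x i) (x (i + 1)) = true := by
    intro i
    obtain ⟨k, h₁, h₂⟩ := ((hx i).and (hx (i + 1))).exists
    rw [← h₁, ← h₂]
    exact (z k).2 i
  exact ⟨⟨x, hadm⟩, tendsto_nhds_iff_eventually_val_eq.2 hx⟩

lemma isCompact_setOf_forall_val_mem {G : Set ℕ} (hG : G.Finite) :
    IsCompact {x : MarkovShift A | ∀ i, x.1 i ∈ G} := by
  rw [isCompact_iff_ultrafilter_le_nhds]
  intro l hl
  rw [le_principal_iff] at hl
  obtain ⟨x, hx⟩ := exists_tendsto_of_eventually_val_mem_finite l id fun j ↦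
    ⟨G, hG, by filter_upwards [hl] with y hy using hy j⟩
  refine ⟨x, fun i ↦ ?_, hx⟩
  obtain ⟨y, hy, hyG⟩ := ((tendsto_nhds_iff_eventually_val_eq.1 hx i).and hl).exists
  exact hy ▸ hyG i

end Topology

section Splice

/-- The point that follows `x` for `j` steps and then continues as `c`; it makes sense when
`x j = c 0`, and is the junk value `c` otherwise. -/
def splice (x : MarkovShift A) (j : ℕ) (c : MarkovShift A) : MarkovShift A :=
  if h : x.1 j = c.1 0 then
    ⟨fun i ↦ if i < j then x.1 i else c.1 (i - j), fun i ↦ by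
      rcases lt_trichotomy (i + 1) j with hi | rfl | hi
      · simpa [hi, (Nat.lt_succ_self i).trans hi] using x.2 i
      · simpa [← h] using x.2 i
      · simpa [show ¬ i < j by omega, show ¬ i + 1 < j by omega, Nat.sub_add_comm
          (show j ≤ i by omega)] using c.2 (i - j)⟩
  else c

variable {x c : MarkovShift A} {j : ℕ}

lemma splice_mem_cylOf (h : x.1 j = c.1 0) : splice x j c ∈ cylOf x j := by
  intro i hi
  simp [splice, h, hi]

lemma shift_iterate_splice (h : x.1 j = c.1 0) : shift^[j] (splice x j c) = c := by
  refine ext fun i ↦ ?_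
  rw [shift_iterate_val]
  simp [splice, h]

lemma splice_mem_cylOf_add {l : ℕ} (h : c ∈ cylOf (shift^[j] x) (l + 1)) :
    splice x j c ∈ cylOf x (j + (l + 1)) := by
  have h₀ : x.1 j = c.1 0 := by rw [h 0 l.succ_pos, shift_iterate_val_zero]
  exact mem_cylOf_add (splice_mem_cylOf h₀) (by rwa [shift_iterate_splice h₀])

lemma splice_mem_cylOf_succ (h : x.1 j = c.1 0) : splice x j c ∈ cylOf x (j + 1) :=
  splice_mem_cylOf_add (l := 0) (mem_cylOf_one.2 (by rw [shift_iterate_val_zero, h]))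

lemma eq_splice {y : MarkovShift A} (h : y ∈ cylOf x j) (hc : shift^[j] y = c)
    (h₀ : x.1 j = c.1 0) : y = splice x j c :=
  eq_of_mem_cylOf_of_shift_iterate_eq (by rwa [cylOf_eq_of_mem (splice_mem_cylOf h₀)])
    (hc.trans (shift_iterate_splice h₀).symm)

/-- Exchanging the tails `x` and `x'` identifies their `n`-step preimages. -/
def fiberEquiv {x x' : MarkovShift A} (h : x.1 0 = x'.1 0) (n : ℕ) :
    {y : MarkovShift A // shift^[n] y = x} ≃ {y : MarkovShift A // shift^[n] y = x'} :=
  have hval {z z' : MarkovShift A} (hz : z.1 0 = z'.1 0) (y : {y // shift^[n] y = z}) :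
      y.1.1 n = z'.1 0 := by rw [← shift_iterate_val_zero, y.2, hz]
  have hinv {z z' : MarkovShift A} (hz : z.1 0 = z'.1 0) (y : {y // shift^[n] y = z}) :
      splice (splice y.1 n z') n z = y.1 := by
    have hmem := splice_mem_cylOf (hval hz y)
    refine (eq_splice ?_ y.2 ?_).symm
    · rw [cylOf_eq_of_mem hmem]
      exact mem_cylOf_self _ _
    · rw [← shift_iterate_val_zero, shift_iterate_splice (hval hz y), hz]
  { toFun y := ⟨splice y.1 n x', shift_iterate_splice (hval h y)⟩
    invFun y := ⟨splice y.1 n x, shift_iterate_splice (hval h.symm y)⟩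
    left_inv y := Subtype.ext (hinv h y)
    right_inv y := Subtype.ext (hinv h.symm y) }

lemma fiberEquiv_mem_cylOf {x x' : MarkovShift A} (h : x.1 0 = x'.1 0) (n : ℕ)
    (y : {y : MarkovShift A // shift^[n] y = x}) : (fiberEquiv h n y).1 ∈ cylOf y.1 n :=
  splice_mem_cylOf (by rw [← shift_iterate_val_zero, y.2, h])

end Splice

section Birkhoff

variable {g : MarkovShift A → ℝ}

lemma birkhoff_zero (g : MarkovShift A → ℝ) (x : MarkovShift A) : birkhoff g 0 x = 0 :=
  birkhoffSum_zero shift g x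

lemma birkhoff_one (g : MarkovShift A → ℝ) (x : MarkovShift A) : birkhoff g 1 x = g x :=
  birkhoffSum_one shift g x

lemma birkhoff_succ (g : MarkovShift A → ℝ) (n : ℕ) (x : MarkovShift A) :
    birkhoff g (n + 1) x = birkhoff g n x + g (shift^[n] x) :=
  birkhoffSum_succ shift g n x

lemma birkhoff_add (g : MarkovShift A → ℝ) (m n : ℕ) (x : MarkovShift A) :
    birkhoff g (m + n) x = birkhoff g m x + birkhoff g n (shift^[m] x) :=
  birkhoffSum_add shift g m n x

lemma birkhoff_const_mul (b : ℝ) (g : MarkovShift A → ℝ) (n : ℕ) (x : MarkovShift A) :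
    birkhoff (fun y ↦ b * g y) n x = b * birkhoff g n x := by
  simp [birkhoff, Finset.mul_sum]

lemma birkhoff_nonneg (hg : ∀ y, 0 ≤ g y) (n : ℕ) (x : MarkovShift A) : 0 ≤ birkhoff g n x :=
  Finset.sum_nonneg fun _ _ ↦ hg _

lemma apply_shift_iterate_le_birkhoff (hg : ∀ y, 0 ≤ g y) {j n : ℕ} (hj : j < n)
    (x : MarkovShift A) : g (shift^[j] x) ≤ birkhoff g n x :=
  Finset.single_le_sum (f := fun j ↦ g (shift^[j] x)) (fun _ _ ↦ hg _) (Finset.mem_range.2 hj)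

lemma birkhoff_monotone (hg : ∀ y, 0 ≤ g y) (x : MarkovShift A) :
    Monotone fun n ↦ birkhoff g n x :=
  monotone_nat_of_le_succ fun n ↦ by simpa [birkhoff_succ] using hg _

end Birkhoff

section KrylovBogolyubov

variable {X : Type*} [MeasurableSpace X]

/-- The uniform probability measure on the orbit segment `z, T z, …, T^N z`, counted with
multiplicity. -/
noncomputable def empiricalMeasure (T : X → X) (z : X) (N : ℕ) : ProbabilityMeasure X :=
  ⟨((N + 1 : ℕ) : ℝ≥0∞)⁻¹ • ∑ j ∈ Finset.range (N + 1), Measure.dirac (T^[j] z), ⟨by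
    simp only [Measure.smul_apply, Measure.finsetSum_apply, measure_univ,
      Finset.sum_const, Finset.card_range, nsmul_eq_mul, mul_one, smul_eq_mul]
    exact ENNReal.inv_mul_cancel (by simp) (by simp)⟩⟩

lemma empiricalMeasure_eq_zero {T : X → X} {z : X} {S : Set X} (hS : MeasurableSet S)
    (h : ∀ j, T^[j] z ∉ S) (N : ℕ) : (empiricalMeasure T z N : Measure X) S = 0 := by
  simp [empiricalMeasure, Measure.dirac_apply' _ hS, h]

variable [TopologicalSpace X]

lemma integral_empiricalMeasure [OpensMeasurableSpace X] (T : X → X) (z : X) (N : ℕ)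
    (g : BoundedContinuousFunction X ℝ) :
    ∫ x, g x ∂(empiricalMeasure T z N : Measure X) = birkhoffAverage ℝ T g (N + 1) z := by
  simp only [empiricalMeasure, ProbabilityMeasure.coe_mk]
  rw [integral_smul_measure, integral_finsetSum_measure fun j _ ↦ g.integrable _, birkhoffAverage,
    birkhoffSum, ENNReal.toReal_inv, ENNReal.toReal_natCast]
  simp only [integral_dirac' _ _ g.continuous.stronglyMeasurable]

variable [BorelSpace X] [HasOuterApproxClosed X] {T : X → X} {z : X}

lemma map_eq_of_tendsto_empiricalMeasure (hT : Continuous T) {l : Filter ℕ} [l.NeBot]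
    (hl : l ≤ atTop) {μ : ProbabilityMeasure X} (hμ : Tendsto (empiricalMeasure T z) l (𝓝 μ)) :
    (μ : Measure X).map T = μ := by
  have := Measure.isProbabilityMeasure_map (μ := (μ : Measure X)) hT.aemeasurable
  refine ext_of_forall_integral_eq_of_IsFiniteMeasure fun g ↦ ?_
  rw [integral_map hT.aemeasurable g.continuous.aestronglyMeasurable, ← sub_eq_zero]
  have hlim := ProbabilityMeasure.tendsto_iff_forall_integral_tendsto.1 hμ
  have hdiff := ((tendsto_birkhoffAverage_apply_sub_birkhoffAverage' ℝ g.isBounded_range T z).comp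
    (tendsto_add_atTop_nat 1)).mono_left hl
  have hcomp := hlim (g.compContinuous ⟨T, hT⟩)
  refine tendsto_nhds_unique (hcomp.sub (hlim g)) (hdiff.congr fun N ↦ ?_)
  rw [integral_empiricalMeasure, integral_empiricalMeasure]
  simp only [Function.comp_apply, birkhoffAverage, birkhoffSum, ← Function.iterate_succ_apply,
    Function.iterate_succ_apply', BoundedContinuousFunction.compContinuous_apply,
    ContinuousMap.coe_mk]

lemma exists_map_eq_of_isCompact [T2Space X] (hT : Continuous T) {K : Set X} (hK : IsCompact K)
    (hz : ∀ j, T^[j] z ∈ K) : ∃ μ : ProbabilityMeasure X, (μ : Measure X).map T = μ ∧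
      ∀ O, IsOpen O → (∀ j, T^[j] z ∉ O) → (μ : Measure X) O = 0 := by
  have htight : IsTightMeasureSet {((μ : ProbabilityMeasure X) : Measure X) |
      μ ∈ Set.range (empiricalMeasure T z)} := by
    refine isTightMeasureSet_iff_exists_isCompact_measure_compl_le.2 fun ε _ ↦ ⟨K, hK, ?_⟩
    rintro _ ⟨_, ⟨N, rfl⟩, rfl⟩
    rw [empiricalMeasure_eq_zero hK.measurableSet.compl (by simpa using hz)]
    exact zero_le
  obtain ⟨μ, -, hμ⟩ := (isCompact_closure_of_isTightMeasureSet htight).ultrafilter_le_nhds'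
    ((hyperfilter ℕ).map (empiricalMeasure T z))
      (Ultrafilter.mem_map.2 (Filter.univ_mem' fun N ↦ subset_closure ⟨N, rfl⟩))
  refine ⟨μ, map_eq_of_tendsto_empiricalMeasure hT Nat.hyperfilter_le_atTop hμ, fun O hO h ↦ ?_⟩
  have hle := ProbabilityMeasure.le_liminf_measure_open_of_tendsto hμ hO
  simpa [empiricalMeasure_eq_zero hO.measurableSet h] using hle

end KrylovBogolyubov

lemma exists_isInvariantProb {G : Set ℕ} (hG : G.Finite) {z : MarkovShift A}
    (hz : ∀ i, z.1 i ∈ G) : ∃ μ : Measure (MarkovShift A), IsInvariantProb μ ∧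
      ∀ O, IsOpen O → (∀ j, shift^[j] z ∉ O) → μ O = 0 := by
  let _ := TopologicalSpace.metrizableSpaceMetric (MarkovShift A)
  obtain ⟨μ, hμ, hμO⟩ := exists_map_eq_of_isCompact continuous_shift
    (isCompact_setOf_forall_val_mem hG) (z := z) fun j i ↦ by
      rw [shift_iterate_val]
      exact hz _
  exact ⟨μ, ⟨inferInstance, hμ⟩, hμO⟩

section ExpENN

/-- The exponential with values in `ℝ≥0∞`, the form in which the weights of the transfer operators
enter, so that no summability has to be discussed. -/
noncomputable def expENN (r : ℝ) : ℝ≥0∞ := ENNReal.ofReal (Real.exp r)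

lemma expENN_add (a b : ℝ) : expENN (a + b) = expENN a * expENN b := by
  rw [expENN, Real.exp_add, ENNReal.ofReal_mul (Real.exp_pos _).le, ← expENN, ← expENN]

lemma expENN_zero : expENN 0 = 1 := by simp [expENN]

lemma expENN_ne_top (a : ℝ) : expENN a ≠ ∞ := ENNReal.ofReal_ne_top

lemma expENN_pos (a : ℝ) : 0 < expENN a := ENNReal.ofReal_pos.2 (Real.exp_pos _)

lemma expENN_ne_zero (a : ℝ) : expENN a ≠ 0 := (expENN_pos a).ne'

lemma expENN_le_expENN {a b : ℝ} : expENN a ≤ expENN b ↔ a ≤ b := by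
  rw [expENN, expENN, ENNReal.ofReal_le_ofReal_iff (Real.exp_pos _).le, Real.exp_le_exp]

lemma expENN_mul_expENN_neg (a : ℝ) : expENN a * expENN (-a) = 1 := by
  rw [← expENN_add, add_neg_cancel, expENN_zero]

lemma expENN_log {r : ℝ} (hr : 0 < r) : expENN (Real.log r) = ENNReal.ofReal r := by
  rw [expENN, Real.exp_log hr]

lemma continuous_expENN : Continuous expENN :=
  ENNReal.continuous_ofReal.comp Real.continuous_exp

lemma measurable_expENN : Measurable expENN := continuous_expENN.measurable

lemma exists_le_expENN {q : ℝ≥0∞} (hq : q ≠ ∞) : ∃ L, q ≤ expENN L := by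
  refine ⟨q.toReal, ?_⟩
  conv_lhs => rw [← ENNReal.ofReal_toReal hq]
  exact ENNReal.ofReal_le_ofReal (by linarith [Real.add_one_le_exp q.toReal])

end ExpENN

section Prepend

/-- The point `a x₀ x₁ …`, with junk value `x` when the transition from `a` to `x₀` is
forbidden. -/
def prepend (a : ℕ) (x : MarkovShift A) : MarkovShift A :=
  if h : A a (x.1 0) = true then
    ⟨fun i ↦ if i = 0 then a else x.1 (i - 1), by
      rintro (_ | i)
      · simpa using h
      · simpa using x.2 i⟩
  else x

variable {a : ℕ} {x : MarkovShift A}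

lemma prepend_val_zero (h : A a (x.1 0) = true) : (prepend a x).1 0 = a := by
  simp [prepend, h]

lemma prepend_val_succ (h : A a (x.1 0) = true) (i : ℕ) : (prepend a x).1 (i + 1) = x.1 i := by
  simp [prepend, h]

lemma shift_prepend (h : A a (x.1 0) = true) : shift (prepend a x) = x :=
  ext fun i ↦ prepend_val_succ h i

lemma eq_of_shift_eq {y z : MarkovShift A} (h₀ : y.1 0 = z.1 0) (h : shift y = shift z) : y = z :=
  eq_of_mem_cylOf_of_shift_iterate_eq (mem_cylOf_one.2 h₀) h

lemma prepend_shift (y : MarkovShift A) : prepend (y.1 0) (shift y) = y :=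
  eq_of_shift_eq (prepend_val_zero (y.2 0)) (shift_prepend (y.2 0))

lemma measurable_prepend (a : ℕ) : Measurable (prepend a : MarkovShift A → MarkovShift A) := by
  have hset : MeasurableSet {x : MarkovShift A | A a (x.1 0) = true} :=
    (continuous_val_apply 0).measurable (MeasurableSet.of_discrete (s := {b | A a b = true}))
  refine measurable_of_restrict_of_restrict_compl hset (Continuous.measurable ?_) ?_
  · refine isEmbedding_val.continuous_iff.2 (continuous_pi fun i ↦ ?_)
    rcases i with _ | i
    · exact continuous_const.congr fun x ↦ (prepend_val_zero x.2).symm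
    · exact ((continuous_val_apply i).comp continuous_subtype_val).congr
        fun x ↦ (prepend_val_succ x.2 i).symm
  · convert measurable_subtype_coe using 1
    exact funext fun x ↦ dif_neg x.2

/-- The preimages of `x` are indexed by the symbols that may precede `x`. -/
def symbolEquiv (x : MarkovShift A) :
    {a // A a (x.1 0) = true} ≃ {y : MarkovShift A // shift y = x} where
  toFun a := ⟨prepend a.1 x, shift_prepend a.2⟩
  invFun y := ⟨y.1.1 0, by obtain ⟨y, rfl⟩ := y; exact y.2 0⟩
  left_inv a := Subtype.ext (prepend_val_zero a.2)
  right_inv y := Subtype.ext (by obtain ⟨y, rfl⟩ := y; exact prepend_shift y)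

end Prepend

section TransferOperator

/-- The Ruelle operator of `w` on functions with values in `ℝ≥0∞`. -/
noncomputable def transferOp (w : MarkovShift A → ℝ) (u : MarkovShift A → ℝ≥0∞)
    (x : MarkovShift A) : ℝ≥0∞ :=
  ∑' y : {y : MarkovShift A // shift y = x}, expENN (w y) * u y

variable {w v : MarkovShift A → ℝ} {u : MarkovShift A → ℝ≥0∞}

lemma transferOp_eq_tsum_prepend (w : MarkovShift A → ℝ) (u : MarkovShift A → ℝ≥0∞)
    (x : MarkovShift A) :
    transferOp w u x = ∑' a, if A a (x.1 0) = true then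
      expENN (w (prepend a x)) * u (prepend a x) else 0 := by
  rw [transferOp, ← (symbolEquiv x).tsum_eq]
  refine (tsum_subtype {a | A a (x.1 0) = true}
    fun a ↦ expENN (w (prepend a x)) * u (prepend a x)).trans (tsum_congr fun a ↦ ?_)
  simp [Set.indicator_apply]

lemma measurable_transferOp (hw : Measurable w) (hu : Measurable u) :
    Measurable (transferOp w u) := by
  rw [funext (transferOp_eq_tsum_prepend w u)]
  refine Measurable.tsum fun a ↦ Measurable.ite ?_ ?_ measurable_const
  · exact (continuous_val_apply 0).measurable
      (MeasurableSet.of_discrete (s := {b | A a b = true}))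
  · exact ((measurable_expENN.comp hw).mul hu).comp (measurable_prepend a)

lemma measurable_transferOp_iterate (hw : Measurable w) (hu : Measurable u) (n : ℕ) :
    Measurable ((transferOp w)^[n] u) := by
  induction n with
  | zero => exact hu
  | succ n ih =>
    rw [Function.iterate_succ_apply']
    exact measurable_transferOp hw ih

lemma transferOp_iterate (w : MarkovShift A → ℝ) (n : ℕ) (u : MarkovShift A → ℝ≥0∞)
    (x : MarkovShift A) :
    (transferOp w)^[n] u x =
      ∑' y : {y : MarkovShift A // shift^[n] y = x}, expENN (birkhoff w n y) * u y := by
  induction n generalizing u with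
  | zero =>
    exact ((tsum_eq_single (⟨x, rfl⟩ : {y : MarkovShift A // shift^[0] y = x})
      fun y hy ↦ (hy (Subtype.ext y.2)).elim).trans
        (by simp [birkhoff_zero, expENN_zero])).symm
  | succ n ih =>
    rw [Function.iterate_succ_apply, ih, ← (Equiv.sigmaSubtypeFiberEquivSubtype shift
      (p := fun z : MarkovShift A ↦ shift^[n + 1] z = x) (q := fun y ↦ shift^[n] y = x)
      fun _ ↦ Iff.rfl).tsum_eq, ENNReal.tsum_sigma']
    refine tsum_congr fun y ↦ ?_
    rw [transferOp, ← ENNReal.tsum_mul_left]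
    refine tsum_congr fun z ↦ ?_
    have hz : birkhoff w (n + 1) z.1 = birkhoff w n y + w z := by
      rw [add_comm n, birkhoff_add, birkhoff_one, Function.iterate_one, z.2, add_comm]
    rw [← mul_assoc, ← expENN_add, ← hz]
    rfl

lemma transferOp_iterate_mono (w : MarkovShift A → ℝ) (n : ℕ) :
    Monotone (transferOp w)^[n] := fun u u' h x ↦ by
  rw [transferOp_iterate, transferOp_iterate]
  exact ENNReal.tsum_le_tsum fun y ↦ by gcongr; exact h y

lemma transferOp_iterate_mul_comp_shift_iterate (w : MarkovShift A → ℝ) (n : ℕ)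
    (u c : MarkovShift A → ℝ≥0∞) (x : MarkovShift A) :
    (transferOp w)^[n] (fun y ↦ c (shift^[n] y) * u y) x = c x * (transferOp w)^[n] u x := by
  rw [transferOp_iterate, transferOp_iterate, ← ENNReal.tsum_mul_left]
  exact tsum_congr fun y ↦ by rw [y.2]; ring

lemma transferOp_iterate_const_mul (w : MarkovShift A → ℝ) (n : ℕ) (c : ℝ≥0∞)
    (u : MarkovShift A → ℝ≥0∞) (x : MarkovShift A) :
    (transferOp w)^[n] (fun y ↦ c * u y) x = c * (transferOp w)^[n] u x :=
  transferOp_iterate_mul_comp_shift_iterate w n u (fun _ ↦ c) x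

lemma transferOp_iterate_add (w v : MarkovShift A → ℝ) (n : ℕ) (u : MarkovShift A → ℝ≥0∞) :
    (transferOp fun y ↦ w y + v y)^[n] u =
      (transferOp w)^[n] fun y ↦ expENN (birkhoff v n y) * u y := by
  ext x
  rw [transferOp_iterate, transferOp_iterate]
  refine tsum_congr fun y ↦ ?_
  rw [← mul_assoc, ← expENN_add]
  simp [birkhoff, Finset.sum_add_distrib]

lemma transferOp_add_const (w : MarkovShift A → ℝ) (c : ℝ) (u : MarkovShift A → ℝ≥0∞)
    (x : MarkovShift A) : transferOp (fun y ↦ w y + c) u x = expENN c * transferOp w u x := by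
  have h := congrFun (transferOp_iterate_add w (fun _ ↦ c) 1 u) x
  simp only [Function.iterate_one, birkhoff_one] at h
  exact h.trans (transferOp_iterate_const_mul w 1 (expENN c) u x)

lemma expENN_mul_le_transferOp_iterate (w : MarkovShift A → ℝ) (n : ℕ)
    (u : MarkovShift A → ℝ≥0∞) (y : MarkovShift A) :
    expENN (birkhoff w n y) * u y ≤ (transferOp w)^[n] u (shift^[n] y) := by
  rw [transferOp_iterate]
  exact ENNReal.le_tsum (⟨y, rfl⟩ : {z : MarkovShift A // shift^[n] z = shift^[n] y})

lemma transferOp_iterate_le_mul {n : ℕ} {x x' : MarkovShift A} (h₀ : x.1 0 = x'.1 0) {K : ℝ≥0∞}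
    (h : ∀ y y', shift^[n] y = x → shift^[n] y' = x' → y' ∈ cylOf y n →
      expENN (birkhoff w n y) * u y ≤ K * (expENN (birkhoff w n y') * u y')) :
    (transferOp w)^[n] u x ≤ K * (transferOp w)^[n] u x' := by
  rw [transferOp_iterate, transferOp_iterate, ← ENNReal.tsum_mul_left,
    ← (fiberEquiv h₀ n).tsum_eq]
  exact ENNReal.tsum_le_tsum fun y ↦
    h _ _ y.2 (fiberEquiv h₀ n y).2 (fiberEquiv_mem_cylOf h₀ n y)

lemma transferOp_iterate_indicator_cylOf (w : MarkovShift A → ℝ) (x : MarkovShift A) (k n : ℕ)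
    (z : MarkovShift A) :
    (transferOp w)^[k] ((cylOf x (k + (n + 1))).indicator 1) z =
      (cylOf (shift^[k] x) (n + 1)).indicator
        (fun z ↦ expENN (birkhoff w k (splice x k z))) z := by
  rw [transferOp_iterate]
  by_cases hz : z ∈ cylOf (shift^[k] x) (n + 1)
  · have h₀ : x.1 k = z.1 0 := by rw [hz 0 n.succ_pos, shift_iterate_val_zero]
    rw [Set.indicator_of_mem hz, tsum_eq_single ⟨splice x k z, shift_iterate_splice h₀⟩]
    · simp [Set.indicator_of_mem (splice_mem_cylOf_add hz)]
    · intro y hy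
      rw [Set.indicator_of_notMem, mul_zero]
      exact fun hyx ↦ hy <| Subtype.ext <| eq_splice (cylOf_anti x (by omega) hyx) y.2 h₀
  · rw [Set.indicator_of_notMem hz, ENNReal.tsum_eq_zero]
    intro y
    rw [Set.indicator_of_notMem, mul_zero]
    exact fun hyx ↦ hz (y.2 ▸ shift_iterate_mem_cylOf hyx)

lemma transferOp_le_tsum {φ : ℕ → ℝ≥0∞} (h : ∀ y, expENN (w y) * u y ≤ φ (y.1 0))
    (x : MarkovShift A) : transferOp w u x ≤ ∑' a, φ a := by
  have hinj : Function.Injective fun y : {y : MarkovShift A // shift y = x} ↦ y.1.1 0 :=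
    fun y z hyz ↦ Subtype.ext (eq_of_shift_eq hyz (y.2.trans z.2.symm))
  exact (ENNReal.tsum_le_tsum fun y ↦ h (Subtype.val y)).trans
    (ENNReal.tsum_comp_le_tsum_of_injective hinj φ)

lemma transferOp_iterate_one_le {Q : ℝ≥0∞} (h : ∀ x, transferOp w 1 x ≤ Q)
    (n : ℕ) (x : MarkovShift A) : (transferOp w)^[n] 1 x ≤ Q ^ n := by
  induction n generalizing x with
  | zero => simp
  | succ n ih =>
    have hle : (transferOp w)^[n] 1 ≤ fun x ↦ Q ^ n * (1 : MarkovShift A → ℝ≥0∞) x :=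
      fun x ↦ by simpa using ih x
    rw [Function.iterate_succ_apply', pow_succ]
    refine (transferOp_iterate_mono w 1 hle x).trans ?_
    rw [transferOp_iterate_const_mul]
    gcongr
    exact h x

lemma ruelle_eq_toReal_transferOp {g φ : MarkovShift A → ℝ} (hφ : ∀ y, 0 ≤ φ y)
    (x : MarkovShift A) :
    ruelle g φ x = (transferOp g (fun y ↦ ENNReal.ofReal (φ y)) x).toReal := by
  rw [transferOp, ENNReal.tsum_toReal_eq
    fun y ↦ ENNReal.mul_ne_top (expENN_ne_top _) ENNReal.ofReal_ne_top]
  refine tsum_congr fun y ↦ ?_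
  rw [ENNReal.toReal_mul, ENNReal.toReal_ofReal (hφ _), expENN,
    ENNReal.toReal_ofReal (Real.exp_pos _).le]

lemma nonneg_of_transferOp_one_eq_one {R : MarkovShift A → ℝ} {β : ℝ} (hβ : 0 < β)
    (h₁ : ∀ x, transferOp (fun y ↦ -β * R y) 1 x = 1) (y : MarkovShift A) : 0 ≤ R y := by
  have h := expENN_mul_le_transferOp_iterate (fun y ↦ -β * R y) 1 1 y
  rw [Function.iterate_one, h₁, birkhoff_one, Pi.one_apply, mul_one, ← expENN_zero,
    expENN_le_expENN] at h
  nlinarith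

end TransferOperator

section TransferMeasure

/-- The measure on the preimages of `x` whose integrals are the values of `transferOp g` at `x`. -/
noncomputable def transferMeasure (g : MarkovShift A → ℝ) (x : MarkovShift A) :
    Measure (MarkovShift A) :=
  Measure.sum fun y : {y : MarkovShift A // shift y = x} ↦ expENN (g y) • Measure.dirac y.1

variable {g : MarkovShift A → ℝ} {ν : Measure (MarkovShift A)}

lemma lintegral_transferMeasure {u : MarkovShift A → ℝ≥0∞} (hu : Measurable u)
    (x : MarkovShift A) : ∫⁻ y, u y ∂transferMeasure g x = transferOp g u x := by
  simp_rw [transferMeasure, lintegral_sum_measure, lintegral_smul_measure, lintegral_dirac' _ hu,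
    transferOp, smul_eq_mul]

lemma measurable_transferMeasure (hg : Measurable g) : Measurable (transferMeasure g) := by
  refine Measure.measurable_of_measurable_coe _ fun S hS ↦ ?_
  have hind : Measurable (S.indicator (1 : MarkovShift A → ℝ≥0∞)) := measurable_one.indicator hS
  convert measurable_transferOp hg hind using 2 with x
  rw [← lintegral_transferMeasure hind, lintegral_indicator_one hS]

lemma lintegral_bind_transferMeasure (hg : Measurable g) {u : MarkovShift A → ℝ≥0∞}
    (hu : Measurable u) :
    ∫⁻ x, u x ∂ν.bind (transferMeasure g) = ∫⁻ x, transferOp g u x ∂ν := by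
  rw [Measure.lintegral_bind (measurable_transferMeasure hg).aemeasurable hu.aemeasurable]
  simp_rw [lintegral_transferMeasure hu]

lemma transferOp_indicator_cylOf_le {B : ℝ} {x : MarkovShift A}
    (hB : ∀ y : MarkovShift A, y.1 0 = x.1 0 → g y ≤ B) (n : ℕ) (z : MarkovShift A) :
    transferOp g ((cylOf x (n + 1)).indicator 1) z ≤ expENN B := by
  refine (transferOp_le_tsum (φ := Pi.single (x.1 0) (expENN B)) (fun y ↦ ?_) z).trans_eq
    (tsum_pi_single _ _)
  by_cases hy : y ∈ cylOf x (n + 1)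
  · have h₀ := hy 0 n.succ_pos
    simpa [hy, h₀] using expENN_le_expENN.2 (hB y h₀)
  · simp [hy]

lemma lintegral_transferOp_indicator_cylOf [IsProbabilityMeasure ν] (hg : Measurable g)
    (hb : ∀ a : ℕ, ∃ B, ∀ y : MarkovShift A, y.1 0 = a → g y ≤ B) {p : ℝ}
    (hν : ∀ φ : MarkovShift A → ℝ, Continuous φ → BoundedFun φ →
      ∫ x, ruelle g φ x ∂ν = Real.exp p * ∫ x, φ x ∂ν) (x : MarkovShift A) (n : ℕ) :
    ∫⁻ z, transferOp g ((cylOf x (n + 1)).indicator 1) z ∂ν = expENN p * ν (cylOf x (n + 1)) := by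
  have hC := isClopen_cylOf x (n + 1)
  obtain ⟨B, hB⟩ := hb (x.1 0)
  have hle := transferOp_indicator_cylOf_le hB n
  have hφ : (fun z ↦ ENNReal.ofReal ((cylOf x (n + 1)).indicator 1 z)) =
      (cylOf x (n + 1)).indicator 1 := by
    ext z; by_cases hz : z ∈ cylOf x (n + 1) <;> simp [hz]
  have hruelle z : ruelle g ((cylOf x (n + 1)).indicator 1) z =
      (transferOp g ((cylOf x (n + 1)).indicator 1) z).toReal := by
    have hnn : ∀ y, 0 ≤ (cylOf x (n + 1)).indicator (1 : MarkovShift A → ℝ) y :=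
      Set.indicator_nonneg fun _ _ ↦ zero_le_one
    rw [ruelle_eq_toReal_transferOp hnn, hφ]
  have hint := hν ((cylOf x (n + 1)).indicator 1)
    (continuous_one.indicator fun z hz ↦ by simp [hC.frontier_eq] at hz)
    ⟨1, fun y ↦ by by_cases hy : y ∈ cylOf x (n + 1) <;> simp [hy]⟩
  have hmeas := measurable_transferOp hg (measurable_one.indicator (measurableSet_cylOf x (n + 1)))
  simp_rw [hruelle] at hint
  rw [integral_toReal hmeas.aemeasurable (ae_of_all _ fun z ↦ (hle z).trans_lt
    (expENN_ne_top B).lt_top), integral_indicator_one (measurableSet_cylOf x _)] at hint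
  have hfin : ∫⁻ z, transferOp g ((cylOf x (n + 1)).indicator 1) z ∂ν ≠ ∞ :=
    ne_top_of_le_ne_top (expENN_ne_top B) ((lintegral_mono hle).trans_eq (by simp))
  rw [← ENNReal.ofReal_toReal hfin, hint, ENNReal.ofReal_mul (Real.exp_pos _).le, ← expENN,
    ofReal_measureReal]

end TransferMeasure

section Conformal

/-- `ν` is fixed by the dual of the Ruelle operator of `g`. -/
def IsConformal (g : MarkovShift A → ℝ) (ν : Measure (MarkovShift A)) : Prop :=
  ∀ u : MarkovShift A → ℝ≥0∞, Measurable u → ∫⁻ x, transferOp g u x ∂ν = ∫⁻ x, u x ∂ν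

variable {g : MarkovShift A → ℝ} {ν : Measure (MarkovShift A)}

lemma isConformal_of_integral_ruelle [IsProbabilityMeasure ν] (hg : Measurable g)
    (hb : ∀ a : ℕ, ∃ B, ∀ y : MarkovShift A, y.1 0 = a → g y ≤ B) {p : ℝ}
    (hν : ∀ φ : MarkovShift A → ℝ, Continuous φ → BoundedFun φ →
      ∫ x, ruelle g φ x ∂ν = Real.exp p * ∫ x, φ x ∂ν) :
    IsConformal (fun y ↦ g y + -p) ν := by
  have hdual : expENN p • ν = ν.bind (transferMeasure g) := by
    have : IsFiniteMeasure (expENN p • ν) := ν.smul_finite (expENN_ne_top p)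
    refine measure_ext_of_cylOf fun x n ↦ ?_
    rw [← lintegral_indicator_one (μ := ν.bind _) (measurableSet_cylOf _ _),
      lintegral_bind_transferMeasure hg (measurable_one.indicator (measurableSet_cylOf _ _)),
      lintegral_transferOp_indicator_cylOf hg hb hν]
    rfl
  intro u hu
  simp_rw [transferOp_add_const]
  rw [lintegral_const_mul _ (measurable_transferOp hg hu),
    ← lintegral_bind_transferMeasure hg hu, ← hdual, lintegral_smul_measure, smul_eq_mul,
    ← mul_assoc, mul_comm (expENN (-p)), expENN_mul_expENN_neg, one_mul]

namespace IsConformal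

lemma lintegral_transferOp_iterate (hν : IsConformal g ν) (hg : Measurable g)
    {u : MarkovShift A → ℝ≥0∞} (hu : Measurable u) (n : ℕ) :
    ∫⁻ x, (transferOp g)^[n] u x ∂ν = ∫⁻ x, u x ∂ν := by
  induction n with
  | zero => rfl
  | succ n ih =>
    rw [Function.iterate_succ_apply', hν _ (measurable_transferOp_iterate hg hu n), ih]

lemma measure_cylOf_add (hν : IsConformal g ν) (hg : Measurable g) (x : MarkovShift A)
    (k n : ℕ) :
    ν (cylOf x (k + (n + 1))) =
      ∫⁻ z in cylOf (shift^[k] x) (n + 1), expENN (birkhoff g k (splice x k z)) ∂ν := by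
  have hm := measurableSet_cylOf x (k + (n + 1))
  rw [← lintegral_indicator_one hm,
    ← hν.lintegral_transferOp_iterate hg (measurable_one.indicator hm) k,
    ← lintegral_indicator (measurableSet_cylOf _ _)]
  exact lintegral_congr (transferOp_iterate_indicator_cylOf g x k n)

lemma measure_cylOf_add_le (hν : IsConformal g ν) (hg : Measurable g) {x : MarkovShift A}
    {k n : ℕ} {t : ℝ} (ht : ∀ y ∈ cylOf x (k + (n + 1)), birkhoff g k y ≤ t) :
    ν (cylOf x (k + (n + 1))) ≤ expENN t * ν (cylOf (shift^[k] x) (n + 1)) := by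
  rw [hν.measure_cylOf_add hg x k n, ← setLIntegral_const]
  exact setLIntegral_mono' (measurableSet_cylOf _ _) fun z hz ↦
    expENN_le_expENN.2 (ht _ (splice_mem_cylOf_add hz))

lemma le_measure_cylOf_add (hν : IsConformal g ν) (hg : Measurable g) {x : MarkovShift A}
    {k n : ℕ} {t : ℝ} (ht : ∀ y ∈ cylOf x (k + (n + 1)), t ≤ birkhoff g k y) :
    expENN t * ν (cylOf (shift^[k] x) (n + 1)) ≤ ν (cylOf x (k + (n + 1))) := by
  rw [hν.measure_cylOf_add hg x k n, ← setLIntegral_const]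
  exact setLIntegral_mono' (measurableSet_cylOf _ _) fun z hz ↦
    expENN_le_expENN.2 (ht _ (splice_mem_cylOf_add hz))

lemma measure_cylOf_shift_iterate_eq_zero (hν : IsConformal g ν) (hg : Measurable g)
    {x : MarkovShift A} {k n : ℕ} (h : ν (cylOf x (k + (n + 1))) = 0) :
    ν (cylOf (shift^[k] x) (n + 1)) = 0 := by
  have hm : Measurable ((cylOf x (k + (n + 1))).indicator (1 : MarkovShift A → ℝ≥0∞)) :=
    measurable_one.indicator (measurableSet_cylOf x _)
  rw [← lintegral_indicator_one (measurableSet_cylOf _ _),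
    ← hν.lintegral_transferOp_iterate hg hm k,
    lintegral_eq_zero_iff (measurable_transferOp_iterate hg hm k)] at h
  refine measure_mono_null (fun z hz ↦ ?_) (ae_iff.1 h)
  simp [transferOp_iterate_indicator_cylOf, hz, expENN_ne_zero]

lemma isOpenPosMeasure [IsProbabilityMeasure ν] (hν : IsConformal g ν) (hg : Measurable g)
    (hmix : TopologicallyMixing A) : ν.IsOpenPosMeasure := by
  refine ⟨fun U hU ⟨x, hx⟩ hU0 ↦ ?_⟩
  obtain ⟨n, -, hn⟩ := (hasBasis_nhds x).mem_iff.1 (hU.mem_nhds hx)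
  obtain ⟨b, hb⟩ := exists_measure_cylOf_one_ne_zero ν
  obtain ⟨N, hN⟩ := hmix (x.1 n) (b.1 0) (admissible_val x n) (admissible_val b 0)
  obtain ⟨z, hz₀, hzN⟩ := hN N le_rfl
  set y := splice x n z
  have hy : shift^[n + N] y ∈ cylOf b 1 := by
    rw [mem_cylOf_one, add_comm, Function.iterate_add_apply, shift_iterate_splice hz₀.symm, hzN]
  refine hb (cylOf_eq_of_mem hy ▸ hν.measure_cylOf_shift_iterate_eq_zero (n := 0) hg ?_)
  refine measure_mono_null (Set.Subset.trans ?_ hn) hU0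
  rw [← cylOf_eq_of_mem (splice_mem_cylOf_succ hz₀.symm)]
  exact cylOf_anti y (by omega)

lemma measure_preimage_shift_iterate (hν : IsConformal g ν) (hg : Measurable g)
    (h₁ : ∀ x, transferOp g 1 x = 1) {S : Set (MarkovShift A)} (hS : MeasurableSet S) (n : ℕ) :
    ν (shift^[n] ⁻¹' S) = ν S := by
  have hT : transferOp g 1 = 1 := funext h₁
  have hm := (continuous_shift.iterate n).measurable hS
  rw [← lintegral_indicator_one hm,
    ← hν.lintegral_transferOp_iterate hg (measurable_one.indicator hm) n,
    ← lintegral_indicator_one hS]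
  refine lintegral_congr fun x ↦ ?_
  calc (transferOp g)^[n] ((shift^[n] ⁻¹' S).indicator 1) x
      = (transferOp g)^[n] (fun y ↦ S.indicator 1 (shift^[n] y) * (1 : MarkovShift A → ℝ≥0∞) y) x :=
        congrFun (congrArg _ (funext fun y ↦ by rw [Pi.one_apply, mul_one]; rfl)) x
    _ = S.indicator 1 x := by
        rw [transferOp_iterate_mul_comp_shift_iterate, Function.iterate_fixed hT, Pi.one_apply,
          mul_one]

/-- The weight `e^{-(β-1)R}` is small on `S`, and the remaining operator, of weight `e^{-R}`, is
bounded independently of `β`. -/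
lemma measure_le_of_le_birkhoff {R : MarkovShift A → ℝ} {β : ℝ} [IsProbabilityMeasure ν]
    (hν : IsConformal (fun y ↦ -β * R y) ν) (hR : Measurable R) (hβ : 1 ≤ β) {Q : ℝ≥0∞}
    (hQ : ∀ x, transferOp (fun y ↦ -R y) 1 x ≤ Q) {k : ℕ} {t : ℝ} {S : Set (MarkovShift A)}
    (hS : MeasurableSet S) (ht : ∀ y ∈ S, t ≤ birkhoff R k y) :
    ν S ≤ expENN (-(β - 1) * t) * Q ^ k := by
  set c := expENN (-(β - 1) * t)
  have hle : S.indicator 1 ≤ fun y ↦ expENN (birkhoff (fun z ↦ (β - 1) * R z) k y) * c := by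
    intro y
    by_cases hy : y ∈ S
    · beta_reduce
      rw [Set.indicator_of_mem hy, Pi.one_apply, ← expENN_add, ← expENN_zero,
        expENN_le_expENN, birkhoff_const_mul]
      nlinarith [ht y hy]
    · simp [hy]
  have hsplit : (fun y ↦ -R y) = fun y ↦ -β * R y + (β - 1) * R y := by ext y; ring
  rw [← lintegral_indicator_one hS,
    ← hν.lintegral_transferOp_iterate (hR.const_mul _) (measurable_one.indicator hS) k]
  calc ∫⁻ x, (transferOp fun y ↦ -β * R y)^[k] (S.indicator 1) x ∂ν
      ≤ ∫⁻ x, (transferOp fun y ↦ -R y)^[k] (fun _ ↦ c * 1) x ∂ν := by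
        refine lintegral_mono fun x ↦ ?_
        rw [hsplit, transferOp_iterate_add, mul_one]
        exact transferOp_iterate_mono _ k hle x
    _ ≤ ∫⁻ _, c * Q ^ k ∂ν := by
        refine lintegral_mono fun x ↦ ?_
        rw [transferOp_iterate_const_mul]
        gcongr
        exact transferOp_iterate_one_le hQ k x
    _ = c * Q ^ k := by simp

end IsConformal

end Conformal

section CylInf

/-- The lower envelope of `H` over the cylinders of length `n`. -/
noncomputable def cylInf (H : MarkovShift A → ℝ≥0∞) (n : ℕ) (x : MarkovShift A) : ℝ≥0∞ :=
  ⨅ y ∈ cylOf x n, H y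

variable {H : MarkovShift A → ℝ≥0∞}

lemma cylInf_eq_of_mem {x y : MarkovShift A} {n : ℕ} (h : y ∈ cylOf x n) :
    cylInf H n y = cylInf H n x := by
  rw [cylInf, cylOf_eq_of_mem h, cylInf]

lemma cylInf_le (H : MarkovShift A → ℝ≥0∞) (n : ℕ) : cylInf H n ≤ H :=
  fun x ↦ iInf₂_le x (mem_cylOf_self x n)

lemma monotone_cylInf (H : MarkovShift A → ℝ≥0∞) : Monotone (cylInf H) :=
  fun _ _ hnm x ↦ le_iInf₂ fun y hy ↦ iInf₂_le y (cylOf_anti x hnm hy)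

lemma measurable_cylInf (H : MarkovShift A → ℝ≥0∞) (n : ℕ) : Measurable (cylInf H n) := by
  refine (IsLocallyConstant.iff_eventually_eq _ |>.2 fun x ↦ ?_).continuous.measurable
  filter_upwards [cylOf_mem_nhds x n] with y hy using cylInf_eq_of_mem hy

lemma iSup_cylInf (hH : Continuous H) (x : MarkovShift A) : ⨆ n, cylInf H n x = H x := by
  refine le_antisymm (iSup_le fun n ↦ cylInf_le H n x) (le_of_forall_lt fun c hc ↦ ?_)
  obtain ⟨c', hcc', hc'⟩ := exists_between hc
  obtain ⟨n, -, hn⟩ := (hasBasis_nhds x).mem_iff.1 (hH.continuousAt.eventually (lt_mem_nhds hc'))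
  exact hcc'.trans_le (le_iSup_of_le (n + 1) (le_iInf₂ fun y hy ↦ (hn hy).le))

variable {g : MarkovShift A → ℝ} {ν : Measure (MarkovShift A)}

lemma transferOp_iterate_cylInf_le (hHg : transferOp g H = H) (n : ℕ) :
    (transferOp g)^[n] (cylInf H n) ≤ H :=
  (transferOp_iterate_mono g n (cylInf_le H n)).trans_eq (Function.iterate_fixed hHg n)

lemma IsConformal.iSup_transferOp_iterate_cylInf_ae_eq (hν : IsConformal g ν) (hg : Measurable g)
    (hH : Continuous H) (hfin : ∫⁻ x, H x ∂ν ≠ ∞) (hHg : transferOp g H = H) :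
    (fun x ↦ ⨆ n, (transferOp g)^[n] (cylInf H n) x) =ᵐ[ν] H := by
  have hle x : ⨆ n, (transferOp g)^[n] (cylInf H n) x ≤ H x :=
    iSup_le fun n ↦ transferOp_iterate_cylInf_le hHg n x
  refine ae_eq_of_ae_le_of_lintegral_le (ae_of_all _ hle)
    (ne_top_of_le_ne_top hfin (lintegral_mono hle)) hH.measurable.aemeasurable ?_
  calc ∫⁻ x, H x ∂ν = ⨆ n, ∫⁻ x, cylInf H n x ∂ν := by
        rw [← lintegral_iSup (measurable_cylInf H) (monotone_cylInf H)]
        simp_rw [iSup_cylInf hH]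
    _ = ⨆ n, ∫⁻ x, (transferOp g)^[n] (cylInf H n) x ∂ν := by
        simp_rw [hν.lintegral_transferOp_iterate hg (measurable_cylInf H _)]
    _ ≤ ∫⁻ x, ⨆ n, (transferOp g)^[n] (cylInf H n) x ∂ν := iSup_lintegral_le _

lemma transferOp_iterate_cylInf_le_mul {k : ℕ} (hk : 1 ≤ k) {M : ℝ}
    (hM : ∀ n, ∀ y y' : MarkovShift A, y' ∈ cylOf y (n + k) →
      birkhoff g n y ≤ M + birkhoff g n y')
    {x x' : MarkovShift A} (h : x' ∈ cylOf x k) (n : ℕ) :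
    (transferOp g)^[n] (cylInf H n) x ≤ expENN M * (transferOp g)^[n] (cylInf H n) x' := by
  refine transferOp_iterate_le_mul (h 0 hk).symm fun y y' hy hy' hyy' ↦ ?_
  have hmem : y' ∈ cylOf y (n + k) := mem_cylOf_add hyy' (by rwa [hy, hy'])
  rw [cylInf_eq_of_mem hyy', ← mul_assoc, ← expENN_add]
  gcongr
  exact expENN_le_expENN.2 (hM n y y' hmem)

/-- The functions `⨆ n, Lⁿ (cylInf H n)` inherit the distortion of the weights, and they exhaust
`H`: nothing is assumed on the modulus of continuity of `H`. -/
lemma IsConformal.le_mul_of_transferOp_eq_self [IsProbabilityMeasure ν] (hν : IsConformal g ν)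
    (hg : Measurable g) (hmix : TopologicallyMixing A) (hH : Continuous H)
    (hfin : ∫⁻ x, H x ∂ν ≠ ∞) (hHg : transferOp g H = H) {k : ℕ} (hk : 1 ≤ k) {M : ℝ}
    (hM : ∀ n, ∀ y y' : MarkovShift A, y' ∈ cylOf y (n + k) →
      birkhoff g n y ≤ M + birkhoff g n y')
    {x x' : MarkovShift A} (h : x' ∈ cylOf x k) : H x ≤ expENN M * H x' := by
  have := hν.isOpenPosMeasure hg hmix
  set U := cylOf x k ∩ H ⁻¹' Set.Ioi (expENN M * H x')
  have hU : IsOpen U := (isClopen_cylOf x k).isOpen.inter (isOpen_Ioi.preimage hH)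
  have hUnull : ν U = 0 := by
    refine measure_mono_null (fun u hu ↦ ?_)
      (ae_iff.1 (hν.iSup_transferOp_iterate_cylInf_ae_eq hg hH hfin hHg))
    refine ne_of_lt ((iSup_le fun n ↦ ?_ : _ ≤ expENN M * H x').trans_lt hu.2)
    refine (transferOp_iterate_cylInf_le_mul hk hM ?_ n).trans
      (by gcongr; exact transferOp_iterate_cylInf_le hHg n x')
    rwa [cylOf_eq_of_mem hu.1]
  by_contra! hlt
  exact (hU.measure_eq_zero_iff ν).1 hUnull |>.subset ⟨mem_cylOf_self x k, hlt⟩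

end CylInf

section Variation

variable {f : MarkovShift A → ℝ}

lemma Var1Finite.abs_sub_le (hf : Var1Finite f) {x y : MarkovShift A} (h : x.1 0 = y.1 0) :
    |f x - f y| ≤ varBirk f 1 1 :=
  le_csSup hf ⟨x, y, fun i hi ↦ by rwa [Nat.lt_one_iff.1 hi], by simp [birkhoff_one]⟩

lemma Var1Finite.exists_abs_le (hf : Var1Finite f) (G : Finset ℕ) :
    ∃ B, ∀ y : MarkovShift A, y.1 0 ∈ G → |f y| ≤ B := by
  have hsymb (a : ℕ) : ∃ B, ∀ y : MarkovShift A, y.1 0 = a → |f y| ≤ B := by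
    by_cases ha : Admissible A a
    · obtain ⟨x, rfl⟩ := ha
      refine ⟨|f x| + varBirk f 1 1, fun y hy ↦ ?_⟩
      linarith [hf.abs_sub_le hy, abs_sub_abs_le_abs_sub (f y) (f x)]
    · exact ⟨0, fun y hy ↦ (ha ⟨y, hy⟩).elim⟩
  choose b hb using hsymb
  obtain ⟨B, hB⟩ := (G.image b).exists_le
  exact ⟨B, fun y hy ↦ (hb _ y rfl).trans (hB _ (Finset.mem_image_of_mem b hy))⟩

lemma waltersSup_nonneg (f : MarkovShift A → ℝ) (k : ℕ) : 0 ≤ waltersSup f k :=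
  Real.sSup_nonneg (by rintro _ ⟨n, -, x, y, -, rfl⟩; exact abs_nonneg _)

lemma SatisfiesWalters.abs_birkhoff_sub_le (hf : SatisfiesWalters f) {k : ℕ} (hk : 1 ≤ k)
    {n : ℕ} {y y' : MarkovShift A} (h : y' ∈ cylOf y (n + k)) :
    |birkhoff f n y - birkhoff f n y'| ≤ waltersSup f k := by
  rcases n.eq_zero_or_pos with rfl | hn
  · simpa [birkhoff_zero] using waltersSup_nonneg f k
  · exact le_csSup (hf.1 k hk) ⟨n, hn, y, y', fun i hi ↦ (h i hi).symm, rfl⟩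

lemma continuous_of_abs_sub_le {M : ℕ → ℝ} (hM : Tendsto M atTop (𝓝 0))
    (h : ∀ᶠ k in atTop, ∀ y y' : MarkovShift A, y' ∈ cylOf y k → |f y - f y'| ≤ M k) :
    Continuous f := by
  refine continuous_iff_continuousAt.2 fun x ↦ Metric.tendsto_nhds.2 fun ε hε ↦ ?_
  obtain ⟨k, hk, hkM⟩ := (h.and (hM.eventually (gt_mem_nhds hε))).exists
  filter_upwards [cylOf_mem_nhds x k] with y hy
  rw [dist_comm, Real.dist_eq]
  exact (hk x y hy).trans_lt hkM

lemma SatisfiesWalters.continuous (hf : SatisfiesWalters f) : Continuous f := by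
  refine continuous_of_abs_sub_le (hf.2.comp (tendsto_sub_atTop_nat 1)) ?_
  filter_upwards [eventually_ge_atTop 2] with k hk y y' h
  have := hf.abs_birkhoff_sub_le (k := k - 1) (n := 1) (by omega)
    (by rwa [Nat.add_sub_cancel' (by omega)])
  simpa [birkhoff_one] using this

end Variation

section Connection

/-- The form in which finite primitivity is used: every admissible symbol `a` is followed by every
point `x` after exactly `k` intermediate symbols, all of them in `F`. -/
def ConnectsThrough (A : ℕ → ℕ → Bool) (k : ℕ) (F : Finset ℕ) : Prop :=
  ∀ a, Admissible A a → ∀ x : MarkovShift A, ∃ z : MarkovShift A,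
    z.1 0 = a ∧ shift^[k + 1] z = x ∧ ∀ i < k, z.1 (i + 1) ∈ F

lemma exists_of_isChain {F : Finset ℕ} {x : MarkovShift A} {w : List ℕ} (hw : ∀ c ∈ w, c ∈ F)
    {a : ℕ} (h : List.IsChain (fun u v ↦ A u v = true) (a :: (w ++ [x.1 0]))) :
    ∃ z : MarkovShift A, z.1 0 = a ∧ shift^[w.length + 1] z = x ∧
      ∀ i < w.length, z.1 (i + 1) ∈ F := by
  induction w generalizing a with
  | nil =>
    have ha : A a (x.1 0) = true := by simpa using h
    exact ⟨prepend a x, prepend_val_zero ha, shift_prepend ha, by simp⟩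
  | cons b w ih =>
    rw [List.cons_append, List.isChain_cons_cons] at h
    obtain ⟨z, rfl, hzx, hzF⟩ := ih (fun c hc ↦ hw c (by simp [hc])) h.2
    refine ⟨prepend a z, prepend_val_zero h.1, ?_, ?_⟩
    · rw [List.length_cons, Function.iterate_succ_apply, shift_prepend h.1, hzx]
    · rintro (_ | i) hi
      · rw [prepend_val_succ h.1]
        exact hw _ (by simp)
      · rw [prepend_val_succ h.1]
        exact hzF i (by simpa using hi)

lemma FinitelyPrimitive.exists_connectsThrough (h : FinitelyPrimitive A) (a : ℕ) :
    ∃ k F, a ∈ F ∧ ConnectsThrough A k F := by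
  obtain ⟨k, F, hF⟩ := h
  refine ⟨k, insert a F, by simp, fun b hb x ↦ ?_⟩
  obtain ⟨w, rfl, hwF, hw⟩ := hF b (x.1 0) hb (admissible_val x 0)
  exact exists_of_isChain (fun c hc ↦ Finset.mem_insert_of_mem (hwF c hc)) hw

lemma exists_periodic {z : MarkovShift A} {n : ℕ} (hn : 1 ≤ n) (h : z.1 n = z.1 0) :
    ∃ p : MarkovShift A, shift^[n] p = p ∧ p ∈ cylOf z n := by
  have hadm (i : ℕ) : A (z.1 (i % n)) (z.1 ((i + 1) % n)) = true := by
    have hi := Nat.mod_lt i hn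
    rw [← Nat.mod_add_mod]
    rcases (Nat.succ_le_of_lt hi).eq_or_lt with hlast | hlt
    · have hlast' : i % n + 1 = n := hlast
      have hz := z.2 (i % n)
      rw [hlast', h] at hz
      rwa [hlast', Nat.mod_self]
    · rw [Nat.mod_eq_of_lt hlt]
      exact z.2 _
  refine ⟨⟨_, hadm⟩, ext fun i ↦ (shift_iterate_val n _ i).trans ?_, fun i hi ↦ ?_⟩
  · exact congrArg z.1 (Nat.add_mod_right i n)
  · exact congrArg z.1 (Nat.mod_eq_of_lt hi)

lemma ConnectsThrough.exists_periodic {k : ℕ} {F : Finset ℕ} (hF : ConnectsThrough A k F)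
    {a b : ℕ} (haF : a ∈ F) (ha : Admissible A a) (hb : Admissible A b) :
    ∃ q : MarkovShift A, shift^[2 * (k + 1)] q = q ∧ q.1 0 = a ∧ q.1 (k + 1) = b ∧
      ∀ i < 2 * (k + 1), i ≠ k + 1 → q.1 i ∈ F := by
  obtain ⟨x, hx⟩ := id ha
  obtain ⟨z, hz₀, hzx, hzF⟩ := hF b hb x
  obtain ⟨y, hy₀, hyz, hyF⟩ := hF a ha z
  have hval (i : ℕ) : y.1 (i + (k + 1)) = z.1 i := by rw [← hyz, shift_iterate_val]
  have hlast : z.1 (k + 1) = a := by rw [← hx, ← hzx, shift_iterate_val_zero]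
  obtain ⟨q, hq, hqy⟩ := MarkovShift.exists_periodic (z := y) (n := 2 * (k + 1)) (by omega)
    (by rw [two_mul, hval, hlast, hy₀])
  refine ⟨q, hq, (hqy 0 (by omega)).trans hy₀, ?_, fun i hi hne ↦ ?_⟩
  · rw [hqy _ (by omega), ← hz₀, ← hval, zero_add]
  rw [hqy i hi]
  rcases lt_or_gt_of_ne hne with hlt | hgt
  · rcases i with _ | i
    · rwa [hy₀]
    · exact hyF i (by omega)
  · obtain ⟨j, rfl⟩ := Nat.exists_eq_add_of_lt hgt
    rw [show k + 1 + j + 1 = j + 1 + (k + 1) by ring, hval]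
    exact hzF j (by omega)

end Connection

section SummableMajorant

/-- `e^{f(y)} ≤ e^{s(y₀)}` where `∑ e^{s(a)}` converges. -/
def IsSummableMajorant (f : MarkovShift A → ℝ) (s : ℕ → ℝ) : Prop :=
  Summable (fun a ↦ Real.exp (s a)) ∧ ∀ y, f y ≤ s (y.1 0)

variable {f g : MarkovShift A → ℝ} {s : ℕ → ℝ}

lemma IsSummableMajorant.finite_setOf_le (hs : IsSummableMajorant f s) (B : ℝ) :
    {a | B ≤ s a}.Finite := by
  have h := hs.1.tendsto_cofinite_zero.eventually (gt_mem_nhds (Real.exp_pos B))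
  simpa [Filter.eventually_cofinite] using h

lemma IsSummableMajorant.of_le_add (hs : IsSummableMajorant f s) {c : ℝ}
    (h : ∀ y, g y ≤ f y + c) : IsSummableMajorant g (fun a ↦ s a + c) :=
  ⟨by simpa only [Real.exp_add] using hs.1.mul_right (Real.exp c),
    fun y ↦ (h y).trans (add_le_add_left (hs.2 y) c)⟩

lemma IsSummableMajorant.tsum_expENN_ne_top (hs : IsSummableMajorant f s) :
    ∑' a, expENN (s a) ≠ ∞ :=
  hs.1.tsum_ofReal_ne_top

lemma IsSummableMajorant.transferOp_one_le (hs : IsSummableMajorant f s) (x : MarkovShift A) :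
    transferOp f 1 x ≤ ∑' a, expENN (s a) :=
  transferOp_le_tsum (fun y ↦ by simpa using expENN_le_expENN.2 (hs.2 y)) x

lemma Var1Finite.sub_le_birkhoff (hf : Var1Finite f) {F : Finset ℕ} {B : ℝ}
    (hB : ∀ y : MarkovShift A, y.1 0 ∈ F → |f y| ≤ B) {q x : MarkovShift A} {n m : ℕ}
    (hm : m < n) (hqx : q.1 m = x.1 0) (hq : ∀ i < n, i ≠ m → q.1 i ∈ F) :
    f x - varBirk f 1 1 - (n - 1 : ℕ) * B ≤ birkhoff f n q := by
  have hmem : m ∈ Finset.range n := Finset.mem_range.2 hm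
  have hrest : ((Finset.range n).erase m).card • (-B) ≤
      ∑ i ∈ (Finset.range n).erase m, f (shift^[i] q) := by
    refine Finset.card_nsmul_le_sum _ _ _ fun i hi ↦ ?_
    rw [Finset.mem_erase, Finset.mem_range] at hi
    exact (abs_le.1 (hB _ (by rw [shift_iterate_val_zero]; exact hq i hi.2 hi.1))).1
  have hmain := abs_le.1 (hf.abs_sub_le (x := shift^[m] q) (y := x)
    (by rw [shift_iterate_val_zero, hqx]))
  rw [Finset.card_erase_of_mem hmem, Finset.card_range, nsmul_eq_mul] at hrest
  rw [birkhoff, ← Finset.add_sum_erase _ _ hmem]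
  linarith

/-- Finite pressure yields summability over periodic points, among which each admissible symbol
`b` has its own, passing through `b` and otherwise through `F`. -/
lemma HasGurevichPressure.exists_isSummableMajorant {p : ℝ} (hp : HasGurevichPressure f p)
    (hf : Var1Finite f) {k : ℕ} {F : Finset ℕ} (hF : ConnectsThrough A k F) {a : ℕ}
    (haF : a ∈ F) (ha : Admissible A a) : ∃ s, IsSummableMajorant f s := by
  classical
  obtain ⟨B, hB⟩ := hf.exists_abs_le F
  set N := 2 * (k + 1)
  have horbit (b : {b // Admissible A b}) := hF.exists_periodic haF ha b.2
  choose q hqN hqa hqb hqF using horbit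
  set c := varBirk f 1 1 + (N - 1 : ℕ) * B
  refine ⟨fun b ↦ if hb : Admissible A b then birkhoff f N (q ⟨b, hb⟩) + c else -b, ?_,
    fun y ↦ ?_⟩
  · let ι : {b // Admissible A b} → {x : MarkovShift A // shift^[N] x = x ∧ x.1 0 = a} :=
      fun b ↦ ⟨q b, hqN b, hqa b⟩
    have hι : Function.Injective ι := fun b b' h ↦ by
      have hq : q b = q b' := congrArg Subtype.val h
      exact Subtype.ext (by rw [← hqb b, ← hqb b', hq])
    refine (summable_subtype_and_compl (s := {b | Admissible A b})).1 ⟨?_, ?_⟩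
    · refine ((((hp a ha).1 N (by omega)).comp_injective hι).mul_right (Real.exp c)).congr
        fun b ↦ ?_
      have hb : Admissible A b := b.2
      simp only [Function.comp_apply, hb, dif_pos, Real.exp_add]
      rfl
    · exact (Real.summable_exp_neg_nat.comp_injective Subtype.val_injective).congr
        fun b ↦ by
          have hb : ¬Admissible A b := b.2
          simp [hb]
  · have hy : Admissible A (y.1 0) := admissible_val y 0
    have := hf.sub_le_birkhoff hB (by omega : k + 1 < N) (hqb ⟨_, hy⟩) (hqF ⟨_, hy⟩)
    simp only [hy, dif_pos]
    linarith

end SummableMajorant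

section Cost

/-- The normalised potential `-f - V + V ∘ σ + c`, up to sign: `R₊` when `V` is a calibrated
sub-action and `c = m(f)`, and `-1/β` times the normalisation of `βf` when `e^{βV}` is an
eigenfunction and `e^{βc}` its eigenvalue. -/
def cost (f V : MarkovShift A → ℝ) (c : ℝ) (x : MarkovShift A) : ℝ :=
  -f x - V x + V (shift x) + c

variable {f V : MarkovShift A → ℝ} {c : ℝ}

lemma continuous_cost (hf : Continuous f) (hV : Continuous V) (c : ℝ) :
    Continuous (cost f V c) :=
  ((hf.neg.sub hV).add (hV.comp continuous_shift)).add continuous_const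

lemma birkhoff_cost (f V : MarkovShift A → ℝ) (c : ℝ) (n : ℕ) (y : MarkovShift A) :
    birkhoff (cost f V c) n y = -birkhoff f n y - V y + V (shift^[n] y) + n * c := by
  induction n with
  | zero => simp [birkhoff_zero]
  | succ n ih =>
    rw [birkhoff_succ, birkhoff_succ, ih, cost, Function.iterate_succ_apply']
    push_cast
    ring

lemma SatisfiesWalters.abs_birkhoff_cost_sub_le (hf : SatisfiesWalters f)
    (hV : ∀ k, 1 ≤ k → ∀ x x' : MarkovShift A, x' ∈ cylOf x k → |V x - V x'| ≤ waltersSup f k)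
    {k : ℕ} (hk : 1 ≤ k) {n : ℕ} {y y' : MarkovShift A} (h : y' ∈ cylOf y (n + k)) :
    |birkhoff (cost f V c) n y - birkhoff (cost f V c) n y'| ≤ 3 * waltersSup f k := by
  have h₁ := abs_le.1 (hf.abs_birkhoff_sub_le hk h)
  have h₂ := abs_le.1 (hV k hk y y' (cylOf_anti y (Nat.le_add_left k n) h))
  have h₃ := abs_le.1 (hV k hk _ _ (shift_iterate_mem_cylOf h))
  rw [birkhoff_cost, birkhoff_cost, abs_le]
  constructor <;> linarith

lemma IsSummableMajorant.neg_cost {s : ℕ → ℝ} (hs : IsSummableMajorant f s) {D : ℝ}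
    (hV : ∀ x y, V x - V y ≤ D) (c : ℝ) :
    IsSummableMajorant (fun y ↦ -cost f V c y) (fun a ↦ s a + (D - c)) :=
  hs.of_le_add fun y ↦ by linarith [hV y (shift y), cost.eq_def f V c y]

lemma transferOp_expENN_mul (f V : MarkovShift A → ℝ) (c β : ℝ) (u : MarkovShift A → ℝ≥0∞)
    (x : MarkovShift A) :
    transferOp (fun y ↦ β * (f y - c)) (fun y ↦ expENN (β * V y) * u y) x =
      expENN (β * V x) * transferOp (fun y ↦ -β * cost f V c y) u x := by
  have h := transferOp_iterate_mul_comp_shift_iterate (fun y ↦ -β * cost f V c y) 1 u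
    (fun x ↦ expENN (β * V x)) x
  simp only [Function.iterate_one] at h
  rw [← h]
  refine tsum_congr fun y ↦ ?_
  rw [← mul_assoc, ← mul_assoc, ← expENN_add, ← expENN_add]
  simp only [cost]
  ring_nf

lemma IsCalibratedSubaction.cost_nonneg (hV : IsCalibratedSubaction f V) (x : MarkovShift A) :
    0 ≤ cost f V (mf f) x := by
  linarith [hV.2.2.1 x, cost.eq_def f V (mf f) x]

lemma IsCalibratedSubaction.exists_cost_eq_zero (hV : IsCalibratedSubaction f V)
    (y : MarkovShift A) : ∃ x, shift x = y ∧ cost f V (mf f) x = 0 := by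
  obtain ⟨x, hx, h⟩ := hV.2.2.2 y
  exact ⟨x, hx, by linarith [cost.eq_def f V (mf f) x]⟩

lemma BoundedFun.exists_sub_le (hV : BoundedFun V) : ∃ D, ∀ x y, V x - V y ≤ D := by
  obtain ⟨C, hC⟩ := hV
  exact ⟨2 * C, fun x y ↦ by linarith [(abs_le.1 (hC x)).2, (abs_le.1 (hC y)).1]⟩

end Cost

section LogRPF

/-- The Ruelle–Perron–Frobenius data of `βf` on a logarithmic scale: eigenfunction `e^{βW}`,
eigenvalue `e^{βp}`, eigenmeasure `ν`. -/
structure IsLogRPF (f : MarkovShift A → ℝ) (β p : ℝ) (W : MarkovShift A → ℝ)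
    (ν : Measure (MarkovShift A)) : Prop where
  isProbabilityMeasure : IsProbabilityMeasure ν
  continuous : Continuous W
  transferOp_eq : transferOp (fun y ↦ β * (f y - p)) (fun y ↦ expENN (β * W y)) =
    fun y ↦ expENN (β * W y)
  isConformal : IsConformal (fun y ↦ β * (f y - p)) ν
  lintegral_eq_one : ∫⁻ x, expENN (β * W x) ∂ν = 1

variable {f W : MarkovShift A → ℝ} {β p : ℝ} {ν : Measure (MarkovShift A)} {s : ℕ → ℝ}

lemma expENN_mul_log_div {r : ℝ} (hβ : β ≠ 0) (hr : 0 < r) :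
    expENN (β * (Real.log r / β)) = ENNReal.ofReal r := by
  rw [mul_div_cancel₀ _ hβ, expENN_log hr]

lemma IsRPF.isLogRPF {h : MarkovShift A → ℝ} (hr : IsRPF (fun x ↦ β * f x) p h ν) (hβ : 0 < β)
    (hf : Continuous f) (hs : IsSummableMajorant f s) :
    IsLogRPF f β (p / β) (fun x ↦ Real.log (h x) / β) ν := by
  obtain ⟨hcont, hpos, heig, hprob, hdual, hint⟩ := hr
  have hweight : (fun y ↦ β * (f y - p / β)) = fun y ↦ β * f y + -p := by
    ext y; rw [mul_sub, mul_div_cancel₀ _ hβ.ne', sub_eq_add_neg]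
  have hexp (x) : expENN (β * (Real.log (h x) / β)) = ENNReal.ofReal (h x) :=
    expENN_mul_log_div hβ.ne' (hpos x)
  refine ⟨hprob, (hcont.log fun x ↦ (hpos x).ne').div_const β, ?_, ?_, ?_⟩
  · ext x
    simp_rw [hweight, hexp, transferOp_add_const]
    have htoReal := ruelle_eq_toReal_transferOp (g := fun x ↦ β * f x) (fun y ↦ (hpos y).le) x
    rw [heig] at htoReal
    have hne : transferOp (fun x ↦ β * f x) (fun y ↦ ENNReal.ofReal (h y)) x ≠ ∞ := fun htop ↦
      (mul_pos (Real.exp_pos p) (hpos x)).ne' (by rw [htoReal, htop, ENNReal.toReal_top])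
    rw [← ENNReal.ofReal_toReal hne, ← htoReal, ENNReal.ofReal_mul (Real.exp_pos p).le, ← expENN,
      ← mul_assoc, mul_comm (expENN (-p)), expENN_mul_expENN_neg, one_mul]
  · rw [hweight]
    refine isConformal_of_integral_ruelle (hf.measurable.const_mul β) (fun a ↦ ⟨β * s a, ?_⟩) hdual
    rintro y rfl
    exact mul_le_mul_of_nonneg_left (hs.2 y) hβ.le
  · have hi : Integrable h ν := by
      by_contra hni
      exact zero_ne_one ((integral_undef hni).symm.trans hint)
    simp_rw [hexp]
    rw [← ofReal_integral_eq_lintegral_ofReal hi (ae_of_all _ fun x ↦ (hpos x).le), hint,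
      ENNReal.ofReal_one]

lemma gibbs_eq_withDensity {h : MarkovShift A → ℝ} (hβ : β ≠ 0) (hpos : ∀ x, 0 < h x) :
    gibbs h ν = ν.withDensity fun x ↦ expENN (β * (Real.log (h x) / β)) := by
  rw [gibbs]
  exact congrArg ν.withDensity (funext fun x ↦ (expENN_mul_log_div hβ (hpos x)).symm)

lemma birkhoff_const_mul_sub (f : MarkovShift A → ℝ) (β p : ℝ) (n : ℕ) (y : MarkovShift A) :
    birkhoff (fun y ↦ β * (f y - p)) n y = β * (birkhoff f n y - n * p) := by
  rw [birkhoff_const_mul]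
  simp [birkhoff]

namespace IsLogRPF

lemma measurable_eigenfunction (hW : IsLogRPF f β p W ν) : Measurable fun x ↦ expENN (β * W x) :=
  measurable_expENN.comp (hW.continuous.measurable.const_mul β)

lemma transferOp_cost_one (hW : IsLogRPF f β p W ν) (x : MarkovShift A) :
    transferOp (fun y ↦ -β * cost f W p y) 1 x = 1 := by
  have h := transferOp_expENN_mul f W p β 1 x
  simp only [Pi.one_apply, mul_one] at h
  rw [hW.transferOp_eq] at h
  exact (ENNReal.mul_eq_left (expENN_ne_zero _) (expENN_ne_top _)).1 h.symm

lemma isProbabilityMeasure_withDensity (hW : IsLogRPF f β p W ν) :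
    IsProbabilityMeasure (ν.withDensity fun x ↦ expENN (β * W x)) :=
  ⟨by rw [withDensity_apply _ .univ, Measure.restrict_univ, hW.lintegral_eq_one]⟩

lemma isConformal_withDensity (hW : IsLogRPF f β p W ν) (hf : Continuous f) :
    IsConformal (fun y ↦ -β * cost f W p y) (ν.withDensity fun x ↦ expENN (β * W x)) := by
  intro u hu
  have hcost : Measurable fun y ↦ -β * cost f W p y :=
    (continuous_cost hf hW.continuous p).measurable.const_mul _
  rw [lintegral_withDensity_eq_lintegral_mul _ hW.measurable_eigenfunction
      (measurable_transferOp hcost hu),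
    lintegral_withDensity_eq_lintegral_mul _ hW.measurable_eigenfunction hu]
  simp_rw [Pi.mul_apply, ← transferOp_expENN_mul]
  exact hW.isConformal _ (hW.measurable_eigenfunction.mul hu)

lemma cost_nonneg (hW : IsLogRPF f β p W ν) (hβ : 0 < β) (y : MarkovShift A) :
    0 ≤ cost f W p y :=
  nonneg_of_transferOp_one_eq_one hβ hW.transferOp_cost_one y

lemma add_birkhoff_sub_le (hW : IsLogRPF f β p W ν) (hβ : 0 < β) (n : ℕ) (z : MarkovShift A) :
    W z + birkhoff f n z - n * p ≤ W (shift^[n] z) := by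
  have := birkhoff_nonneg (hW.cost_nonneg hβ) n z
  rw [birkhoff_cost] at this
  linarith

lemma abs_sub_le (hW : IsLogRPF f β p W ν) (hβ : 0 < β) (hf : SatisfiesWalters f)
    (hmix : TopologicallyMixing A) {k : ℕ} (hk : 1 ≤ k) {x x' : MarkovShift A}
    (h : x' ∈ cylOf x k) : |W x - W x'| ≤ waltersSup f k := by
  have hprob := hW.isProbabilityMeasure
  have hle {x x' : MarkovShift A} (h : x' ∈ cylOf x k) : W x ≤ waltersSup f k + W x' := by
    have hexp := hW.isConformal.le_mul_of_transferOp_eq_self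
      ((hf.continuous.measurable.sub_const p).const_mul β) hmix
      (H := fun y ↦ expENN (β * W y))
      (continuous_expENN.comp (hW.continuous.const_mul β))
      (by simp [hW.lintegral_eq_one]) hW.transferOp_eq hk (M := β * waltersSup f k) ?_ h
    · rw [← expENN_add, expENN_le_expENN, ← mul_add] at hexp
      exact le_of_mul_le_mul_left hexp hβ
    · intro n y y' hy
      rw [birkhoff_const_mul_sub, birkhoff_const_mul_sub, ← mul_add]
      exact mul_le_mul_of_nonneg_left
        (by linarith [(abs_le.1 (hf.abs_birkhoff_sub_le hk hy)).2]) hβ.le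
  rw [abs_le]
  constructor <;> linarith [hle h, hle (cylOf_eq_of_mem h ▸ mem_cylOf_self x k)]

end IsLogRPF

end LogRPF

section Pressure

variable {f V W : MarkovShift A → ℝ} {β p : ℝ} {ν : Measure (MarkovShift A)} {s : ℕ → ℝ}

lemma IsConformal.le_one_of_mul_le {g : MarkovShift A → ℝ} {u : MarkovShift A → ℝ≥0∞}
    (hν : IsConformal g ν) (hu : Measurable u) (h₀ : ∫⁻ x, u x ∂ν ≠ 0)
    (htop : ∫⁻ x, u x ∂ν ≠ ∞) {c : ℝ≥0∞} (h : ∀ x, c * u x ≤ transferOp g u x) : c ≤ 1 := by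
  have hle := lintegral_mono h (μ := ν)
  rw [lintegral_const_mul _ hu, hν u hu] at hle
  rw [← ENNReal.mul_inv_cancel h₀ htop, ← div_eq_mul_inv]
  exact (ENNReal.le_div_iff_mul_le (Or.inl h₀) (Or.inl htop)).2 hle

lemma IsConformal.one_le_of_le_mul {g : MarkovShift A → ℝ} {u : MarkovShift A → ℝ≥0∞}
    (hν : IsConformal g ν) (hu : Measurable u) (h₀ : ∫⁻ x, u x ∂ν ≠ 0)
    (htop : ∫⁻ x, u x ∂ν ≠ ∞) {c : ℝ≥0∞} (h : ∀ x, transferOp g u x ≤ c * u x) : 1 ≤ c := by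
  have hle := lintegral_mono h (μ := ν)
  rw [lintegral_const_mul _ hu, hν u hu] at hle
  rw [← ENNReal.mul_inv_cancel h₀ htop, ← div_eq_mul_inv]
  exact ENNReal.div_le_of_le_mul hle

lemma lintegral_expENN_ne_zero [NeZero ν] {φ : MarkovShift A → ℝ} (hφ : Measurable φ) :
    ∫⁻ x, expENN (φ x) ∂ν ≠ 0 := fun h ↦ by
  obtain ⟨x, hx⟩ := ((lintegral_eq_zero_iff (measurable_expENN.comp hφ)).1 h).exists
  exact expENN_ne_zero _ hx

lemma lintegral_expENN_ne_top [IsFiniteMeasure ν] {φ : MarkovShift A → ℝ} {C : ℝ}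
    (hφ : ∀ x, φ x ≤ C) : ∫⁻ x, expENN (φ x) ∂ν ≠ ∞ := by
  refine ne_top_of_le_ne_top ?_ (lintegral_mono fun x ↦ expENN_le_expENN.2 (hφ x))
  rw [lintegral_const]
  exact ENNReal.mul_ne_top (expENN_ne_top C) (measure_ne_top ν _)

lemma transferOp_expENN (f V : MarkovShift A → ℝ) (p c β : ℝ) (x : MarkovShift A) :
    transferOp (fun y ↦ β * (f y - p)) (fun y ↦ expENN (β * V y)) x =
      expENN (β * (c - p)) *
        (expENN (β * V x) * transferOp (fun y ↦ -β * cost f V c y) 1 x) := by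
  have h := transferOp_expENN_mul f V c β 1 x
  simp only [Pi.one_apply, mul_one] at h
  rw [← h, ← transferOp_add_const]
  refine congrFun₂ (congrArg transferOp (funext fun y ↦ ?_)) _ _
  ring

lemma IsSummableMajorant.mono {f g : MarkovShift A → ℝ} (hs : IsSummableMajorant f s)
    (h : ∀ y, g y ≤ f y) : IsSummableMajorant g s :=
  ⟨hs.1, fun y ↦ (h y).trans (hs.2 y)⟩

lemma IsCalibratedSubaction.one_le_transferOp_cost (hV : IsCalibratedSubaction f V) (β : ℝ)
    (x : MarkovShift A) : 1 ≤ transferOp (fun y ↦ -β * cost f V (mf f) y) 1 x := by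
  obtain ⟨y, rfl, hy⟩ := hV.exists_cost_eq_zero x
  have h := expENN_mul_le_transferOp_iterate (fun y ↦ -β * cost f V (mf f) y) 1 1 y
  rwa [birkhoff_one, hy, mul_zero, expENN_zero, one_mul] at h

lemma IsLogRPF.mf_le (hW : IsLogRPF f β p W ν) (hβ : 0 < β) (hV : IsCalibratedSubaction f V) :
    mf f ≤ p := by
  have := hW.isProbabilityMeasure
  obtain ⟨C, hC⟩ := hV.2.1
  have hm : Measurable fun y ↦ β * V y := hV.1.measurable.const_mul β
  have hle := hW.isConformal.le_one_of_mul_le (measurable_expENN.comp hm)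
    (lintegral_expENN_ne_zero hm)
    (lintegral_expENN_ne_top fun x ↦ mul_le_mul_of_nonneg_left (abs_le.1 (hC x)).2 hβ.le)
    (c := expENN (β * (mf f - p))) fun x ↦ ?_
  · rw [← expENN_zero, expENN_le_expENN] at hle
    nlinarith
  · simp only [Function.comp_apply]
    refine le_of_le_of_eq ?_ (transferOp_expENN f V p (mf f) β x).symm
    gcongr
    exact le_mul_of_one_le_right' (hV.one_le_transferOp_cost β x)

lemma IsCalibratedSubaction.exists_le_mf_add (hV : IsCalibratedSubaction f V)
    (hs : IsSummableMajorant f s) :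
    ∃ L, ∀ β p W ν, 1 ≤ β → IsLogRPF f β p W ν → p ≤ mf f + L / β := by
  obtain ⟨D, hD⟩ := hV.2.1.exists_sub_le
  have hs' := hs.neg_cost hD (mf f)
  obtain ⟨L, hL⟩ := exists_le_expENN hs'.tsum_expENN_ne_top
  refine ⟨L, fun β p W ν hβ hW ↦ ?_⟩
  have hβ₀ : 0 < β := zero_lt_one.trans_le hβ
  have := hW.isProbabilityMeasure
  obtain ⟨C, hC⟩ := hV.2.1
  have hm : Measurable fun y ↦ β * V y := hV.1.measurable.const_mul β
  have hT (x) : transferOp (fun y ↦ -β * cost f V (mf f) y) 1 x ≤ expENN L :=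
    ((hs'.mono fun y ↦ by nlinarith [hV.cost_nonneg y]).transferOp_one_le x).trans hL
  have hle := hW.isConformal.one_le_of_le_mul (measurable_expENN.comp hm)
    (lintegral_expENN_ne_zero hm)
    (lintegral_expENN_ne_top fun x ↦ mul_le_mul_of_nonneg_left (abs_le.1 (hC x)).2 hβ₀.le)
    (c := expENN (β * (mf f - p) + L)) fun x ↦ ?_
  · rw [← expENN_zero, expENN_le_expENN] at hle
    rw [← sub_le_iff_le_add', le_div_iff₀ hβ₀]
    linarith
  · refine (transferOp_expENN f V p (mf f) β x).trans_le ?_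
    rw [expENN_add, mul_assoc, mul_comm (expENN L)]
    simp only [Function.comp_apply]
    gcongr
    exact hT x

end Pressure

section Oscillation

variable {f W : MarkovShift A → ℝ} {β p : ℝ} {ν : Measure (MarkovShift A)} {k : ℕ}
  {F : Finset ℕ}

lemma IsLogRPF.le_add_of_connectsThrough (hW : IsLogRPF f β p W ν) (hβ : 0 < β)
    (hf : SatisfiesWalters f) (hmix : TopologicallyMixing A) (hF : ConnectsThrough A k F)
    {B : ℝ} (hB : ∀ y : MarkovShift A, y.1 0 ∈ F → |f y| ≤ B) {x ξ : MarkovShift A}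
    (hξ : ξ.1 0 ∈ F) : W ξ ≤ W x + (waltersSup f 1 + (k + 1) * (B + p)) := by
  obtain ⟨z, hz₀, rfl, hzF⟩ := hF (ξ.1 0) (admissible_val ξ 0) x
  have hsum := hW.add_birkhoff_sub_le hβ (k + 1) z
  have hB' : (Finset.range (k + 1)).card • (-B) ≤ birkhoff f (k + 1) z := by
    refine Finset.card_nsmul_le_sum _ _ _ fun j hj ↦ (abs_le.1 (hB _ ?_)).1
    rw [shift_iterate_val_zero]
    rcases j with _ | j
    · rwa [hz₀]
    · exact hzF j (Nat.succ_lt_succ_iff.1 (Finset.mem_range.1 hj))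
  rw [Finset.card_range, nsmul_eq_mul] at hB'
  have hvar := abs_le.1 (hW.abs_sub_le hβ hf hmix le_rfl (mem_cylOf_one.2 hz₀))
  push_cast at hsum hB'
  linarith

lemma ConnectsThrough.exists_finset (hF : ConnectsThrough A k F) {a₀ : ℕ} (ha₀ : a₀ ∈ F)
    (hadm : Admissible A a₀) :
    ∃ S : Finset (MarkovShift A), (∀ x ∈ S, x.1 0 ∈ F) ∧
      ∀ a, Admissible A a → ∃ x ∈ S, A a (x.1 0) = true := by
  classical
  obtain ⟨x₀, rfl⟩ := hadm
  have : Nonempty (MarkovShift A) := ⟨x₀⟩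
  choose! ξ hξ using fun b (hb : Admissible A b) ↦ hb
  refine ⟨(F.filter (Admissible A)).image ξ, fun x hx ↦ ?_, fun a ha ↦ ?_⟩
  · obtain ⟨b, hb, rfl⟩ := Finset.mem_image.1 hx
    rw [Finset.mem_filter] at hb
    rw [hξ b hb.2]
    exact hb.1
  · obtain ⟨z, rfl, hzx, hzF⟩ := hF a ha x₀
    have hz₁ : z.1 1 ∈ F := by
      rcases k with _ | k
      · subst hzx
        exact ha₀
      · exact hzF 0 k.succ_pos
    refine ⟨ξ (z.1 1), Finset.mem_image_of_mem ξ (Finset.mem_filter.2 ⟨hz₁, admissible_val z 1⟩),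
      ?_⟩
    rw [hξ _ (admissible_val z 1)]
    exact z.2 0

lemma transferOp_le_sum_transferOp {w : MarkovShift A → ℝ} {u : MarkovShift A → ℝ≥0∞} {K : ℝ≥0∞}
    (hK : ∀ y y' : MarkovShift A, y.1 0 = y'.1 0 → expENN (w y) * u y ≤ K * (expENN (w y') * u y'))
    {S : Finset (MarkovShift A)}
    (hS : ∀ a, Admissible A a → ∃ x ∈ S, A a (x.1 0) = true) (y : MarkovShift A) :
    transferOp w u y ≤ ∑ x ∈ S, K * transferOp w u x := by
  simp_rw [transferOp_eq_tsum_prepend, ← ENNReal.tsum_mul_left]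
  rw [← Summable.tsum_finsetSum fun _ _ ↦ ENNReal.summable]
  refine ENNReal.tsum_le_tsum fun a ↦ ?_
  by_cases ha : A a (y.1 0) = true
  · obtain ⟨x, hx, hax⟩ := hS a ⟨prepend a y, prepend_val_zero ha⟩
    refine le_trans ?_ (Finset.single_le_sum (fun _ _ ↦ zero_le) hx)
    rw [if_pos ha, if_pos hax]
    exact hK _ _ (by rw [prepend_val_zero ha, prepend_val_zero hax])
  · simp [ha]

lemma natCast_le_expENN {β : ℝ} (hβ : 1 ≤ β) (n : ℕ) : (n : ℝ≥0∞) ≤ expENN (β * n) := by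
  rw [expENN, ← ENNReal.ofReal_natCast]
  refine ENNReal.ofReal_le_ofReal ?_
  nlinarith [Real.add_one_le_exp (β * n), (n.cast_nonneg : (0 : ℝ) ≤ n)]

lemma IsLogRPF.le_add_card (hW : IsLogRPF f β p W ν) (hβ : 1 ≤ β) (hf : SatisfiesWalters f)
    (hf₁ : Var1Finite f) (hmix : TopologicallyMixing A) {S : Finset (MarkovShift A)}
    (hS : ∀ a, Admissible A a → ∃ x ∈ S, A a (x.1 0) = true) {D : ℝ} (hD : ∀ x ∈ S, W x ≤ D)
    (y : MarkovShift A) : W y ≤ varBirk f 1 1 + waltersSup f 1 + D + S.card := by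
  have hβ₀ : 0 < β := zero_lt_one.trans_le hβ
  have hdist (y y' : MarkovShift A) (h : y.1 0 = y'.1 0) :
      expENN (β * (f y - p)) * expENN (β * W y) ≤ expENN (β * (varBirk f 1 1 + waltersSup f 1)) *
        (expENN (β * (f y' - p)) * expENN (β * W y')) := by
    have hvar := abs_le.1 (hf₁.abs_sub_le h)
    have hosc := abs_le.1 (hW.abs_sub_le hβ₀ hf hmix le_rfl (mem_cylOf_one.2 h.symm))
    simp_rw [← expENN_add, ← mul_add]
    exact expENN_le_expENN.2 (mul_le_mul_of_nonneg_left (by linarith) hβ₀.le)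
  have hle : expENN (β * W y) ≤ S.card * expENN (β * (varBirk f 1 1 + waltersSup f 1 + D)) := by
    calc expENN (β * W y)
        ≤ ∑ x ∈ S, expENN (β * (varBirk f 1 1 + waltersSup f 1)) * expENN (β * W x) := by
          simpa only [hW.transferOp_eq] using transferOp_le_sum_transferOp hdist hS y
      _ ≤ S.card • expENN (β * (varBirk f 1 1 + waltersSup f 1 + D)) := by
          refine Finset.sum_le_card_nsmul _ _ _ fun x hx ↦ ?_
          rw [← expENN_add, ← mul_add, expENN_le_expENN]
          exact mul_le_mul_of_nonneg_left (by linarith [hD x hx]) hβ₀.le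
      _ = _ := nsmul_eq_mul _ _
  have hexp := hle.trans (mul_le_mul_left (natCast_le_expENN hβ S.card) _)
  rw [← expENN_add, expENN_le_expENN, ← mul_add] at hexp
  linarith [le_of_mul_le_mul_left hexp hβ₀]

lemma exists_forall_isLogRPF_sub_le (hf : SatisfiesWalters f) (hf₁ : Var1Finite f)
    (hmix : TopologicallyMixing A) (hF : ConnectsThrough A k F) {a₀ : ℕ} (ha₀ : a₀ ∈ F)
    (hadm : Admissible A a₀) (b : ℝ) :
    ∃ D, ∀ β p W ν, 1 ≤ β → p ≤ b → IsLogRPF f β p W ν → ∀ x y, W y - W x ≤ D := by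
  obtain ⟨B, hB⟩ := hf₁.exists_abs_le F
  obtain ⟨S, hSF, hS⟩ := hF.exists_finset ha₀ hadm
  refine ⟨varBirk f 1 1 + waltersSup f 1 + (waltersSup f 1 + (k + 1) * (B + b)) + S.card,
    fun β p W ν hβ hp hW x y ↦ ?_⟩
  have hD (ξ) (hξ : ξ ∈ S) : W ξ ≤ W x + (waltersSup f 1 + (k + 1) * (B + b)) :=
    (hW.le_add_of_connectsThrough (zero_lt_one.trans_le hβ) hf hmix hF hB (hSF ξ hξ)).trans
      (by gcongr)
  linarith [hW.le_add_card hβ hf hf₁ hmix hS hD y]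

end Oscillation

section ZeroOrbits

/-- Every orbit along which `R` vanishes accumulates at `c₀`. For `R = R₊` this expresses that such
orbits carry a maximizing measure whose support contains `c₀`. -/
def ZeroOrbitsVisit (R : MarkovShift A → ℝ) (c₀ : MarkovShift A) : Prop :=
  ∀ z, (∀ j, R (shift^[j] z) = 0) → ∀ k, ∃ j, shift^[j] z ∈ cylOf c₀ k

variable {ι : Type*} {R : ι → MarkovShift A → ℝ} {Rp : MarkovShift A → ℝ} {s : ℕ → ℝ}
  {c₀ : MarkovShift A}

lemma exists_tendsto_forall_eq_zero (l : Ultrafilter ι) (hR : Equicontinuous R)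
    (hs : ∀ i, IsSummableMajorant (fun y ↦ -R i y) s)
    (hlim : ∀ x, Tendsto (fun i ↦ R i x) l (𝓝 (Rp x))) {z : ι → MarkovShift A}
    (hz : ∀ j, Tendsto (fun i ↦ R i (shift^[j] (z i))) l (𝓝 0)) :
    ∃ w, Tendsto z l (𝓝 w) ∧ ∀ j, Rp (shift^[j] w) = 0 := by
  rcases isEmpty_or_nonempty ι with _ | ⟨⟨i₀⟩⟩
  · exact absurd (Subsingleton.elim _ _) (l.neBot.ne)
  obtain ⟨w, hw⟩ := exists_tendsto_of_eventually_val_mem_finite l z fun j ↦ by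
    refine ⟨_, (hs i₀).finite_setOf_le (-1), ?_⟩
    filter_upwards [(hz j).eventually (gt_mem_nhds one_pos)] with i hi
    have := (hs i).2 (shift^[j] (z i))
    rw [shift_iterate_val_zero] at this
    exact (neg_le_neg hi.le).trans this
  refine ⟨w, hw, fun j ↦ tendsto_nhds_unique (hlim _) ?_⟩
  have hwj := ((continuous_shift.iterate j).tendsto w).comp hw
  rw [Metric.tendsto_nhds]
  intro ε hε
  filter_upwards [Metric.tendsto_nhds.1 (hz j) (ε / 2) (half_pos hε),
    hwj.eventually (Metric.equicontinuousAt_iff_right.1 (hR (shift^[j] w)) (ε / 2) (half_pos hε))]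
    with i hi hi'
  exact (dist_triangle _ _ _).trans_lt ((add_lt_add (hi' i) hi).trans_eq (add_halves ε))

/-- Otherwise orbits with ever smaller values of `R i` along ever longer stretches which miss the
cylinder would accumulate at an orbit on which `Rp` vanishes and which misses the cylinder. -/
lemma ZeroOrbitsVisit.exists_uniform (hvis : ZeroOrbitsVisit Rp c₀) {l : Filter ι}
    (hR : Equicontinuous R) (hnonneg : ∀ i y, 0 ≤ R i y)
    (hs : ∀ i, IsSummableMajorant (fun y ↦ -R i y) s)
    (hlim : ∀ x, Tendsto (fun i ↦ R i x) l (𝓝 (Rp x))) (k : ℕ) :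
    ∃ n : ℕ, ∀ᶠ i in l, ∀ z, (∀ j < n, R i (shift^[j] z) ≤ 1 / (n + 1)) →
      ∃ j < n, shift^[j] z ∈ cylOf c₀ k := by
  by_contra! hcon
  set S := {q : ℕ × ι | ∃ z : MarkovShift A, (∀ j < q.1, R q.2 (shift^[j] z) ≤ 1 / (q.1 + 1)) ∧
    ∀ j < q.1, shift^[j] z ∉ cylOf c₀ k}
  have hfreq : ∃ᶠ q in atTop ×ˢ l, q ∈ S := fun hev ↦ by
    obtain ⟨n, hn⟩ := hev.curry.exists
    obtain ⟨i, hi, hi'⟩ := ((hcon n).and_eventually hn).exists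
    exact hi' hi
  have := frequently_mem_iff_neBot.1 hfreq
  set u := Ultrafilter.of (atTop ×ˢ l ⊓ 𝓟 S)
  have hu : (u : Filter (ℕ × ι)) ≤ atTop ×ˢ l ⊓ 𝓟 S := Ultrafilter.of_le _
  have hu₁ : Tendsto Prod.fst (u : Filter (ℕ × ι)) atTop :=
    tendsto_fst.mono_left (hu.trans inf_le_left)
  have hu₂ : Tendsto Prod.snd (u : Filter (ℕ × ι)) l :=
    tendsto_snd.mono_left (hu.trans inf_le_left)
  have hS : ∀ᶠ q in (u : Filter (ℕ × ι)), q ∈ S := le_principal_iff.1 (hu.trans inf_le_right)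
  have hne : Nonempty (MarkovShift A) := ⟨c₀⟩
  choose! z hzR hzk using fun q (hq : q ∈ S) ↦ hq
  obtain ⟨w, hzw, hw⟩ := exists_tendsto_forall_eq_zero u (hR.comp Prod.snd) (fun q ↦ hs q.2)
    (fun x ↦ (hlim x).comp hu₂) (z := z) fun j ↦ by
      refine squeeze_zero' (.of_forall fun q ↦ hnonneg _ _) ?_
        (tendsto_one_div_add_atTop_nhds_zero_nat.comp hu₁)
      filter_upwards [hS, hu₁.eventually_gt_atTop j] with q hq hj using hzR q hq j hj
  obtain ⟨j, hj⟩ := hvis w hw k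
  have hev := (((continuous_shift.iterate j).tendsto w).comp hzw).eventually
    ((isClopen_cylOf c₀ k).isOpen.mem_nhds hj)
  obtain ⟨q, hq, hqS, hjq⟩ := (hev.and (hS.and (hu₁.eventually_gt_atTop j))).exists
  exact hzk q hqS j hjq hq

end ZeroOrbits

section Calibrated

variable {f V W : MarkovShift A → ℝ} {s : ℕ → ℝ} {c₀ : MarkovShift A}
  {μ μmax : Measure (MarkovShift A)}

lemma IsInvariantProb.isMaximizing_of_cost_ae_eq_zero (hμ : IsInvariantProb μ) (hV : Continuous V)
    (hVb : BoundedFun V) (h : ∀ᵐ x ∂μ, cost f V (mf f) x = 0) : IsMaximizing f μ := by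
  have hprob := hμ.1
  have hshift : MeasurePreserving shift μ μ := ⟨continuous_shift.measurable, hμ.2⟩
  obtain ⟨C, hC⟩ := hVb
  have hVi : Integrable V μ :=
    .of_bound hV.aestronglyMeasurable C (.of_forall fun x ↦ by simpa using hC x)
  have hVi' : Integrable (fun x ↦ V (shift x)) μ := hshift.integrable_comp_of_integrable hVi
  have hae : f =ᵐ[μ] fun x ↦ V (shift x) - V x + mf f := by
    filter_upwards [h] with x hx
    linarith [cost.eq_def f V (mf f) x]
  refine ⟨hμ, ((hVi'.sub hVi).add (integrable_const _)).congr hae.symm, ?_⟩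
  have hint : ∫ x, V (shift x) ∂μ = ∫ x, V x ∂μ := by
    conv_rhs => rw [← hμ.2]
    exact (integral_map hshift.measurable.aemeasurable
      (hV.aestronglyMeasurable)).symm
  calc ∫ x, f x ∂μ = ∫ x, (V (shift x) - V x + mf f) ∂μ := integral_congr_ae hae
    _ = ∫ x, (V (shift x) - V x) ∂μ + ∫ _, mf f ∂μ :=
        integral_add (hVi'.sub hVi) (integrable_const _)
    _ = mf f := by rw [integral_sub hVi' hVi, hint]; simp

namespace IsCalibratedSubaction

lemma zeroOrbitsVisit (hV : IsCalibratedSubaction f V) (hf : Continuous f)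
    (hs : IsSummableMajorant f s) (huniq : ∀ ν', IsMaximizing f ν' → ν' = μmax)
    (hc₀ : c₀ ∈ msupport μmax) : ZeroOrbitsVisit (cost f V (mf f)) c₀ := by
  intro z hz k
  by_contra! havoid
  obtain ⟨D, hD⟩ := hV.2.1.exists_sub_le
  have hs' := hs.neg_cost hD (mf f)
  obtain ⟨μ, hμ, hnull⟩ := exists_isInvariantProb (hs'.finite_setOf_le 0) (z := z) fun i ↦ by
    have hle : -cost f V (mf f) (shift^[i] z) ≤ _ := hs'.2 (shift^[i] z)
    rwa [hz, neg_zero, shift_iterate_val_zero] at hle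
  have hmax : IsMaximizing f μ := hμ.isMaximizing_of_cost_ae_eq_zero hV.1 hV.2.1 <|
    hnull _ (isOpen_ne_fun (continuous_cost hf hV.1 _) continuous_const) fun j hj ↦ hj (hz j)
  have hopen := (isClopen_cylOf c₀ k).isOpen
  exact (hc₀ _ hopen (mem_cylOf_self c₀ k)).ne' (huniq μ hmax ▸ hnull _ hopen havoid)

lemma exists_backward_orbit (hV : IsCalibratedSubaction f V) (n : ℕ) (y : MarkovShift A) :
    ∃ z, shift^[n] z = y ∧ ∀ j < n, cost f V (mf f) (shift^[j] z) = 0 := by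
  induction n with
  | zero => exact ⟨y, rfl, by simp⟩
  | succ n ih =>
    obtain ⟨z, hzy, hz⟩ := ih
    obtain ⟨x, rfl, hx⟩ := hV.exists_cost_eq_zero z
    refine ⟨x, hzy, fun j hj ↦ ?_⟩
    cases j with
    | zero => exact hx
    | succ j => exact hz j (by omega)

lemma exists_mem_cylOf_birkhoff_eq_zero (hV : IsCalibratedSubaction f V) (hf : Continuous f)
    (hs : IsSummableMajorant f s) (hvis : ZeroOrbitsVisit (cost f V (mf f)) c₀) (k : ℕ)
    (y : MarkovShift A) :
    ∃ n, ∃ z ∈ cylOf c₀ k, shift^[n] z = y ∧ birkhoff (cost f V (mf f)) n z = 0 := by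
  obtain ⟨D, hD⟩ := hV.2.1.exists_sub_le
  obtain ⟨n, hn⟩ := hvis.exists_uniform (R := fun _ : Unit ↦ cost f V (mf f)) (l := pure ())
    (equicontinuous_unique.2 (continuous_cost hf hV.1 _)) (fun _ ↦ hV.cost_nonneg)
    (fun _ ↦ hs.neg_cost hD _) (fun _ ↦ tendsto_const_nhds) k
  obtain ⟨z, hzy, hz⟩ := hV.exists_backward_orbit n y
  obtain ⟨j, hj, hjz⟩ := eventually_pure.1 hn z fun j hj ↦ (hz j hj).trans_le (by positivity)
  refine ⟨n - j, _, hjz, ?_, Finset.sum_eq_zero fun i hi ↦ ?_⟩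
  · rw [← Function.iterate_add_apply, Nat.sub_add_cancel hj.le, hzy]
  · rw [Finset.mem_range] at hi
    rw [← Function.iterate_add_apply, hz _ (by omega)]

lemma sub_le_sub (hV : IsCalibratedSubaction f V) (hW : IsCalibratedSubaction f W)
    (hf : Continuous f) (hs : IsSummableMajorant f s)
    (hvis : ZeroOrbitsVisit (cost f V (mf f)) c₀) (y : MarkovShift A) :
    W c₀ - V c₀ ≤ W y - V y := by
  choose n z hzk hzy hz using hV.exists_mem_cylOf_birkhoff_eq_zero hf hs hvis (y := y)
  have hlim : Tendsto z atTop (𝓝 c₀) := tendsto_nhds_iff_eventually_val_eq.2 fun j ↦ by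
    filter_upwards [eventually_gt_atTop j] with k hk using hzk k j hk
  refine le_of_tendsto (((hW.1.sub hV.1).tendsto c₀).comp hlim) (.of_forall fun k ↦ ?_)
  have hVz := hz k
  have hWz := birkhoff_nonneg hW.cost_nonneg (n k) (z k)
  rw [birkhoff_cost, hzy] at hVz hWz
  simp only [Function.comp_apply, Pi.sub_apply]
  linarith

lemma sub_eq_sub (hV : IsCalibratedSubaction f V) (hW : IsCalibratedSubaction f W)
    (hf : Continuous f) (hs : IsSummableMajorant f s)
    (huniq : ∀ ν', IsMaximizing f ν' → ν' = μmax) (hc₀ : c₀ ∈ msupport μmax)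
    (x y : MarkovShift A) : W x - W y = V x - V y := by
  have hV₀ := hV.zeroOrbitsVisit hf hs huniq hc₀
  have hW₀ := hW.zeroOrbitsVisit hf hs huniq hc₀
  linarith [hV.sub_le_sub hW hf hs hV₀ x, hV.sub_le_sub hW hf hs hV₀ y,
    hW.sub_le_sub hV hf hs hW₀ x, hW.sub_le_sub hV hf hs hW₀ y]

end IsCalibratedSubaction

end Calibrated

section ZeroTemperature

variable {ι : Type*} {β : ι → ℝ} {R : ι → MarkovShift A → ℝ} {μ : ι → Measure (MarkovShift A)}
  {D s : ℕ → ℝ} {l : Filter ι}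

/-- A family of normalised potentials `-βᵢRᵢ` together with their Gibbs measures `μᵢ`, with
distortion `D` and majorant `s` independent of `i`. The zero temperature limit is the limit along a
filter with `βᵢ → ∞`. -/
structure IsZeroTemperatureFamily (β : ι → ℝ) (R : ι → MarkovShift A → ℝ)
    (μ : ι → Measure (MarkovShift A)) (D s : ℕ → ℝ) : Prop where
  one_le : ∀ i, 1 ≤ β i
  isProbabilityMeasure : ∀ i, IsProbabilityMeasure (μ i)
  isConformal : ∀ i, IsConformal (fun y ↦ -β i * R i y) (μ i)
  transferOp_one : ∀ i x, transferOp (fun y ↦ -β i * R i y) 1 x = 1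
  isSummableMajorant : ∀ i, IsSummableMajorant (fun y ↦ -R i y) s
  abs_birkhoff_sub_le : ∀ i n k, 1 ≤ k → ∀ y y' : MarkovShift A, y' ∈ cylOf y (n + k) →
    |birkhoff (R i) n y - birkhoff (R i) n y'| ≤ D k
  tendsto_zero : Tendsto D atTop (𝓝 0)

namespace IsZeroTemperatureFamily

lemma pos (hR : IsZeroTemperatureFamily β R μ D s) (i : ι) : 0 < β i :=
  zero_lt_one.trans_le (hR.one_le i)

lemma nonneg (hR : IsZeroTemperatureFamily β R μ D s) (i : ι) (y : MarkovShift A) : 0 ≤ R i y :=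
  nonneg_of_transferOp_one_eq_one (hR.pos i) (hR.transferOp_one i) y

lemma abs_sub_le (hR : IsZeroTemperatureFamily β R μ D s) (i : ι) {k : ℕ} (hk : 1 ≤ k)
    {y y' : MarkovShift A} (h : y' ∈ cylOf y (1 + k)) : |R i y - R i y'| ≤ D k := by
  simpa only [birkhoff_one] using hR.abs_birkhoff_sub_le i 1 k hk y y' h

lemma equicontinuous (hR : IsZeroTemperatureFamily β R μ D s) : Equicontinuous R := by
  intro y
  rw [Metric.equicontinuousAt_iff_right]
  intro ε hε
  obtain ⟨k, hkε, hk⟩ :=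
    ((hR.tendsto_zero.eventually (gt_mem_nhds hε)).and (eventually_ge_atTop 1)).exists
  filter_upwards [cylOf_mem_nhds y (1 + k)] with y' hy' i
  exact (hR.abs_sub_le i hk hy').trans_lt hkε

lemma continuous (hR : IsZeroTemperatureFamily β R μ D s) (i : ι) : Continuous (R i) :=
  hR.equicontinuous.continuous i

lemma tsum_exp_eq_one (hR : IsZeroTemperatureFamily β R μ D s) (i : ι) (y : MarkovShift A) :
    ∑' a, (if A a (y.1 0) = true then Real.exp (-β i * R i (prepend a y)) else 0) = 1 := by
  have h := congrArg ENNReal.toReal (hR.transferOp_one i y)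
  rw [transferOp_eq_tsum_prepend, ENNReal.toReal_one, ENNReal.tsum_toReal_eq fun a ↦ by
    split_ifs <;> simp [expENN_ne_top]] at h
  rw [← h]
  refine tsum_congr fun a ↦ ?_
  split_ifs <;> simp [expENN, (Real.exp_pos _).le]

/-- If `Rp` were positive on the whole fibre over `y`, all terms of `∑ₐ exp (-βᵢ Rᵢ (a y)) = 1`
would tend to `0`. -/
lemma exists_eq_zero (hR : IsZeroTemperatureFamily β R μ D s) [l.NeBot] (hβ : Tendsto β l atTop)
    {Rp : MarkovShift A → ℝ} (hlim : ∀ x, Tendsto (fun i ↦ R i x) l (𝓝 (Rp x)))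
    (y : MarkovShift A) : ∃ x, shift x = y ∧ Rp x = 0 := by
  by_contra! hne
  have hpos (x) (hx : shift x = y) : 0 < Rp x :=
    (ge_of_tendsto' (hlim x) fun i ↦ hR.nonneg i x).lt_of_ne' (hne x hx)
  obtain ⟨i₀⟩ : Nonempty ι := nonempty_of_neBot l
  have htsum : Tendsto (fun i ↦ ∑' a,
      (if A a (y.1 0) = true then Real.exp (-β i * R i (prepend a y)) else 0)) l
      (𝓝 (∑' _ : ℕ, (0 : ℝ))) := by
    refine tendsto_tsum_of_dominated_convergence (hR.isSummableMajorant i₀).1 (fun a ↦ ?_)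
      (.of_forall fun i a ↦ ?_)
    · split_ifs with ha
      · refine Real.tendsto_exp_atBot.comp ?_
        simp_rw [neg_mul]
        exact tendsto_neg_atTop_atBot.comp
          (hβ.atTop_mul_pos (hpos _ (shift_prepend ha)) (hlim (prepend a y)))
      · exact tendsto_const_nhds
    · split_ifs with ha
      · rw [Real.norm_of_nonneg (Real.exp_pos _).le]
        refine Real.exp_le_exp.2 ?_
        have hs := (hR.isSummableMajorant i).2 (prepend a y)
        rw [prepend_val_zero ha] at hs
        nlinarith [hR.nonneg i (prepend a y), hR.one_le i]
      · simpa using (Real.exp_pos _).le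
  simp_rw [hR.tsum_exp_eq_one, tsum_zero] at htsum
  exact one_ne_zero (tendsto_nhds_unique tendsto_const_nhds htsum)

end IsZeroTemperatureFamily

variable {f V : MarkovShift A → ℝ} {W : ι → MarkovShift A → ℝ} {p : ι → ℝ}
  {ν : ι → Measure (MarkovShift A)} {b C c : ℝ}

lemma isZeroTemperatureFamily_cost (hf : SatisfiesWalters f) (hmix : TopologicallyMixing A)
    (hs : IsSummableMajorant f s) (hβ : ∀ i, 1 ≤ β i)
    (hW : ∀ i, IsLogRPF f (β i) (p i) (W i) (ν i)) (hC : ∀ i x y, W i x - W i y ≤ C)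
    (hb : ∀ i, b ≤ p i) :
    IsZeroTemperatureFamily β (fun i ↦ cost f (W i) (p i))
      (fun i ↦ (ν i).withDensity fun x ↦ expENN (β i * W i x))
      (fun k ↦ 3 * waltersSup f k) (fun a ↦ s a + (C - b)) where
  one_le := hβ
  isProbabilityMeasure i := (hW i).isProbabilityMeasure_withDensity
  isConformal i := (hW i).isConformal_withDensity hf.continuous
  transferOp_one i := (hW i).transferOp_cost_one
  isSummableMajorant i := hs.of_le_add fun y ↦ by
    linarith [hC i y (shift y), hb i, cost.eq_def f (W i) (p i) y]
  abs_birkhoff_sub_le i n k hk y y' h := hf.abs_birkhoff_cost_sub_le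
    (fun k hk _ _ ↦ (hW i).abs_sub_le (zero_lt_one.trans_le (hβ i)) hf hmix hk) hk h
  tendsto_zero := by simpa using hf.2.const_mul 3

lemma tendsto_cost (hW : ∀ x y, Tendsto (fun i ↦ W i x - W i y) l (𝓝 (V x - V y)))
    (hp : Tendsto p l (𝓝 c)) (x : MarkovShift A) :
    Tendsto (fun i ↦ cost f (W i) (p i) x) l (𝓝 (cost f V c x)) := by
  convert ((tendsto_const_nhds (x := -f x)).sub (hW x (shift x))).add hp using 2 <;>
    rw [cost] <;> ring

lemma exists_tendsto_sub (l : Ultrafilter ι) (hC : ∀ i x y, W i x - W i y ≤ C) :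
    ∃ V : MarkovShift A → ℝ, ∀ x y, Tendsto (fun i ↦ W i x - W i y) l (𝓝 (V x - V y)) := by
  rcases isEmpty_or_nonempty (MarkovShift A) with _ | ⟨⟨x₀⟩⟩
  · exact ⟨fun _ ↦ 0, isEmptyElim⟩
  have hex (x) : ∃ v, Tendsto (fun i ↦ W i x - W i x₀) l (𝓝 v) := by
    obtain ⟨v, -, hv⟩ := (isCompact_Icc (a := -C) (b := C)).ultrafilter_le_nhds'
      (l.map fun i ↦ W i x - W i x₀)
      (Ultrafilter.mem_map.2 <| univ_mem' fun i ↦ ⟨by linarith [hC i x₀ x], hC i x x₀⟩)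
    exact ⟨v, hv⟩
  choose V hV using hex
  refine ⟨V, fun x y ↦ ?_⟩
  simpa only [sub_sub_sub_cancel_right] using (hV x).sub (hV y)

lemma IsZeroTemperatureFamily.isCalibratedSubaction
    (hR : IsZeroTemperatureFamily β (fun i ↦ cost f (W i) (p i)) μ D s) [l.NeBot]
    (hβ : Tendsto β l atTop) (hC : ∀ i x y, W i x - W i y ≤ C) {M : ℕ → ℝ}
    (hM : ∀ i k, 1 ≤ k → ∀ x x' : MarkovShift A, x' ∈ cylOf x k → |W i x - W i x'| ≤ M k)
    (hM₀ : Tendsto M atTop (𝓝 0)) (hp : Tendsto p l (𝓝 (mf f)))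
    (hW : ∀ x y, Tendsto (fun i ↦ W i x - W i y) l (𝓝 (V x - V y))) :
    IsCalibratedSubaction f V := by
  have hlim := tendsto_cost (f := f) hW hp
  refine ⟨continuous_of_abs_sub_le hM₀ ?_, ?_, fun x ↦ ?_, fun y ↦ ?_⟩
  · filter_upwards [eventually_ge_atTop 1] with k hk x x' hx
    exact le_of_tendsto' (hW x x').abs fun i ↦ hM i k hk x x' hx
  · rcases isEmpty_or_nonempty (MarkovShift A) with _ | ⟨⟨x₀⟩⟩
    · exact ⟨0, isEmptyElim⟩
    refine ⟨C + |V x₀|, fun x ↦ ?_⟩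
    have h₁ := le_of_tendsto' (hW x x₀) fun i ↦ hC i x x₀
    have h₂ := le_of_tendsto' (hW x₀ x) fun i ↦ hC i x₀ x
    exact abs_le.2 ⟨by linarith [neg_abs_le (V x₀)], by linarith [le_abs_self (V x₀)]⟩
  · linarith [ge_of_tendsto' (hlim x) fun i ↦ hR.nonneg i x, cost.eq_def f V (mf f) x]
  · obtain ⟨x, hx, hx₀⟩ := hR.exists_eq_zero hβ hlim y
    exact ⟨x, hx, by linarith [cost.eq_def f V (mf f) x]⟩

lemma IsZeroTemperatureFamily.tendsto_cost {s₀ : ℕ → ℝ} {μmax : Measure (MarkovShift A)}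
    {c₀ : MarkovShift A}
    (hR : IsZeroTemperatureFamily β (fun i ↦ cost f (W i) (p i)) μ D s)
    (hβ : Tendsto β l atTop) (hC : ∀ i x y, W i x - W i y ≤ C) {M : ℕ → ℝ}
    (hM : ∀ i k, 1 ≤ k → ∀ x x' : MarkovShift A, x' ∈ cylOf x k → |W i x - W i x'| ≤ M k)
    (hM₀ : Tendsto M atTop (𝓝 0)) (hp : Tendsto p l (𝓝 (mf f))) (hf : Continuous f)
    (hs : IsSummableMajorant f s₀) (huniq : ∀ ν', IsMaximizing f ν' → ν' = μmax)
    (hc₀ : c₀ ∈ msupport μmax) (hV : IsCalibratedSubaction f V) (x : MarkovShift A) :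
    Tendsto (fun i ↦ cost f (W i) (p i) x) l (𝓝 (cost f V (mf f) x)) := by
  rw [tendsto_iff_ultrafilter]
  intro u hu
  obtain ⟨V', hV'⟩ := exists_tendsto_sub u hC
  have hcal := hR.isCalibratedSubaction (hβ.mono_left hu) hC hM hM₀ (hp.mono_left hu) hV'
  refine MarkovShift.tendsto_cost (fun x y ↦ ?_) (hp.mono_left hu) x
  rw [← hV.sub_eq_sub hcal hf hs huniq hc₀]
  exact hV' x y

end ZeroTemperature

section MeasureAsymptotics

variable {ι : Type*} {β : ι → ℝ} {R : ι → MarkovShift A → ℝ} {μ : ι → Measure (MarkovShift A)}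
  {D s : ℕ → ℝ} {l : Filter ι} {Rp : MarkovShift A → ℝ} {c₀ : MarkovShift A}

lemma tendsto_expENN_neg_mul (hβ : Tendsto β l atTop) {ε : ℝ} (hε : 0 < ε) :
    Tendsto (fun i ↦ expENN (-β i * ε)) l (𝓝 0) := by
  simp_rw [neg_mul]
  simpa [expENN] using ENNReal.tendsto_ofReal (Real.tendsto_exp_atBot.comp
    (tendsto_neg_atTop_atBot.comp (hβ.atTop_mul_const hε)))

lemma IsConformal.one_le_mul_measure {g : MarkovShift A → ℝ} {ν : Measure (MarkovShift A)}
    [IsProbabilityMeasure ν] (hν : IsConformal g ν) (hg : Measurable g)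
    (h₁ : ∀ x, transferOp g 1 x = 1) {S : Set (MarkovShift A)} (hS : MeasurableSet S) {n : ℕ}
    (h : ∀ z, ∃ j < n, shift^[j] z ∈ S) : 1 ≤ n * ν S := by
  have hcover : (Set.univ : Set (MarkovShift A)) ⊆ ⋃ j ∈ Finset.range n, shift^[j] ⁻¹' S :=
    fun z _ ↦ by simpa using h z
  calc (1 : ℝ≥0∞) = ν Set.univ := measure_univ.symm
    _ ≤ ∑ j ∈ Finset.range n, ν (shift^[j] ⁻¹' S) :=
        (measure_mono hcover).trans (measure_biUnion_finset_le _ _)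
    _ = n * ν S := by simp [hν.measure_preimage_shift_iterate hg h₁ hS]

lemma exists_forall_le_of_birkhoff_lt {g : MarkovShift A → ℝ} (hg : ∀ y, 0 ≤ g y) {δ : ℝ}
    {n q : ℕ} {y : MarkovShift A} (h : birkhoff g (n * q) y < q * δ) :
    ∃ w < q, ∀ j < n, g (shift^[j] (shift^[n * w] y)) ≤ δ := by
  induction q with
  | zero => simp [birkhoff_zero] at h
  | succ q ih =>
    by_cases hq : ∀ j < n, g (shift^[j] (shift^[n * q] y)) ≤ δ
    · exact ⟨q, q.lt_succ_self, hq⟩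
    push Not at hq
    obtain ⟨j, hj, hjδ⟩ := hq
    rw [Nat.mul_succ, birkhoff_add] at h
    push_cast at h
    obtain ⟨w, hw, hwδ⟩ := ih
      (by linarith [apply_shift_iterate_le_birkhoff hg hj (shift^[n * q] y)])
    exact ⟨w, hw.trans q.lt_succ_self, hwδ⟩

lemma finite_setOf_shift_iterate_eq (c₀ : MarkovShift A) {G : Set ℕ} (hG : G.Finite) (j : ℕ) :
    {u : MarkovShift A | shift^[j] u = c₀ ∧ ∀ i < j, u.1 i ∈ G}.Finite := by
  induction j with
  | zero => exact (Set.finite_singleton c₀).subset fun u hu ↦ hu.1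
  | succ j ih =>
    exact (hG.image2 prepend ih).subset fun u hu ↦ ⟨u.1 0, hu.2 0 j.succ_pos, shift u,
      ⟨hu.1, fun i hi ↦ hu.2 (i + 1) (Nat.succ_lt_succ hi)⟩, prepend_shift u⟩

lemma tendsto_birkhoff (hlim : ∀ x, Tendsto (fun i ↦ R i x) l (𝓝 (Rp x))) (n : ℕ)
    (y : MarkovShift A) : Tendsto (fun i ↦ birkhoff (R i) n y) l (𝓝 (birkhoff Rp n y)) :=
  tendsto_finsetSum _ fun j _ ↦ hlim (shift^[j] y)

/-- The infimal cost, measured by Birkhoff sums of `R`, of reaching `c₀` in at least `n` steps from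
a point of the cylinder `cylOf x n`. For `R = R₊` it is the exponential rate at which the Gibbs
measure of this cylinder decays in the zero temperature limit. -/
noncomputable def passageCost (R : MarkovShift A → ℝ) (c₀ x : MarkovShift A) (n : ℕ) : ℝ :=
  sInf {t | ∃ j ≥ n, ∃ y ∈ cylOf x n, shift^[j] y = c₀ ∧ birkhoff R j y = t}

lemma passageCost_le (hRp : ∀ y, 0 ≤ Rp y) {x y : MarkovShift A} {n j : ℕ} (hj : n ≤ j)
    (hy : y ∈ cylOf x n) (hyj : shift^[j] y = c₀) : passageCost Rp c₀ x n ≤ birkhoff Rp j y :=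
  csInf_le ⟨0, by rintro _ ⟨j, -, y, -, -, rfl⟩; exact birkhoff_nonneg hRp j y⟩
    ⟨j, hj, y, hy, hyj, rfl⟩

lemma ConnectsThrough.exists_birkhoff_lt {k : ℕ} {F : Finset ℕ} (hF : ConnectsThrough A k F)
    (R : MarkovShift A → ℝ) (c₀ x : MarkovShift A) (n : ℕ) {ε : ℝ} (hε : 0 < ε) :
    ∃ j ≥ n, ∃ y ∈ cylOf x n, shift^[j] y = c₀ ∧ birkhoff R j y < passageCost R c₀ x n + ε := by
  obtain ⟨z, hz₀, hzk, -⟩ := hF (x.1 n) (admissible_val x n) c₀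
  have hne : {t | ∃ j ≥ n, ∃ y ∈ cylOf x n, shift^[j] y = c₀ ∧ birkhoff R j y = t}.Nonempty :=
    ⟨_, k + 1 + n, Nat.le_add_left n _, splice x n z, splice_mem_cylOf hz₀.symm, by
      rw [Function.iterate_add_apply, shift_iterate_splice hz₀.symm, hzk], rfl⟩
  obtain ⟨_, ⟨j, hj, y, hy, hyj, rfl⟩, hlt⟩ :=
    exists_lt_of_csInf_lt hne (lt_add_of_pos_right (passageCost R c₀ x n) hε)
  exact ⟨j, hj, y, hy, hyj, hlt⟩

lemma expENN_neg_mul_le_iff {b t : ℝ} (hb : 0 < b) {m : ℝ≥0∞} (h₀ : m ≠ 0) (htop : m ≠ ∞) :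
    expENN (-b * t) ≤ m ↔ -t ≤ 1 / b * Real.log m.toReal := by
  rw [← ENNReal.ofReal_toReal htop, ← expENN_log (ENNReal.toReal_pos h₀ htop), expENN_le_expENN,
    expENN_log (ENNReal.toReal_pos h₀ htop), ENNReal.ofReal_toReal htop, one_div,
    le_inv_mul_iff₀ hb, neg_mul, mul_neg]

lemma le_expENN_neg_mul_iff {b t : ℝ} (hb : 0 < b) {m : ℝ≥0∞} (h₀ : m ≠ 0) (htop : m ≠ ∞) :
    m ≤ expENN (-b * t) ↔ 1 / b * Real.log m.toReal ≤ -t := by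
  rw [← ENNReal.ofReal_toReal htop, ← expENN_log (ENNReal.toReal_pos h₀ htop), expENN_le_expENN,
    expENN_log (ENNReal.toReal_pos h₀ htop), ENNReal.ofReal_toReal htop, one_div,
    inv_mul_le_iff₀ hb, neg_mul, mul_neg]

namespace IsZeroTemperatureFamily

lemma measurable (hR : IsZeroTemperatureFamily β R μ D s) (i : ι) :
    Measurable fun y ↦ -β i * R i y :=
  (hR.continuous i).measurable.const_mul _

lemma nonneg_of_tendsto (hR : IsZeroTemperatureFamily β R μ D s) [l.NeBot]
    (hlim : ∀ x, Tendsto (fun i ↦ R i x) l (𝓝 (Rp x))) (x : MarkovShift A) : 0 ≤ Rp x :=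
  ge_of_tendsto' (hlim x) fun i ↦ hR.nonneg i x

lemma measure_cylOf_ne_zero (hR : IsZeroTemperatureFamily β R μ D s) (hmix : TopologicallyMixing A)
    (i : ι) (x : MarkovShift A) (n : ℕ) : μ i (cylOf x n) ≠ 0 := by
  have := hR.isProbabilityMeasure i
  have := (hR.isConformal i).isOpenPosMeasure (hR.measurable i) hmix
  exact (isClopen_cylOf x n).isOpen.measure_ne_zero (μ i) ⟨x, mem_cylOf_self x n⟩

lemma eventually_measure_le (hR : IsZeroTemperatureFamily β R μ D s) (hβ : Tendsto β l atTop)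
    (k : ℕ) (t : ℝ) {ε : ℝ} (hε : 0 < ε) :
    ∀ᶠ i in l, ∀ S, MeasurableSet S → (∀ y ∈ S, t ≤ birkhoff (R i) k y) →
      μ i S ≤ expENN (-β i * (t - ε)) := by
  rcases isEmpty_or_nonempty ι with _ | ⟨⟨i₀⟩⟩
  · exact .of_forall isEmptyElim
  obtain ⟨L, hL⟩ := exists_le_expENN
    (ENNReal.pow_ne_top (hR.isSummableMajorant i₀).tsum_expENN_ne_top (n := k))
  filter_upwards [(hβ.atTop_mul_const hε).eventually_ge_atTop (t + L)] with i hi S hS ht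
  have := hR.isProbabilityMeasure i
  calc μ i S ≤ expENN (-(β i - 1) * t) * (∑' a, expENN (s a)) ^ k :=
        (hR.isConformal i).measure_le_of_le_birkhoff (hR.continuous i).measurable (hR.one_le i)
          (hR.isSummableMajorant i).transferOp_one_le hS ht
    _ ≤ expENN (-(β i - 1) * t) * expENN L := by gcongr
    _ ≤ expENN (-β i * (t - ε)) := by
        rw [← expENN_add, expENN_le_expENN]
        linarith

/-- By invariance `1 ≤ n (μᵢ (cylOf c₀ k) + μᵢ {Rᵢ > δ})`, because any orbit segment of length `n`
meets one of the two sets, and the second one has exponentially small measure. -/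
lemma eventually_expENN_le_measure_cylOf (hR : IsZeroTemperatureFamily β R μ D s)
    (hβ : Tendsto β l atTop) (hlim : ∀ x, Tendsto (fun i ↦ R i x) l (𝓝 (Rp x)))
    (hvis : ZeroOrbitsVisit Rp c₀) (k : ℕ) {ε : ℝ} (hε : 0 < ε) :
    ∀ᶠ i in l, expENN (-β i * ε) ≤ μ i (cylOf c₀ k) := by
  obtain ⟨n, hn⟩ := hvis.exists_uniform hR.equicontinuous hR.nonneg hR.isSummableMajorant hlim k
  set δ : ℝ := 1 / (n + 1)
  have hδ : 0 < δ := Nat.one_div_pos_of_nat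
  have hsmall : Tendsto (fun i ↦ n * (expENN (-β i * ε) + expENN (-β i * (δ / 2)))) l (𝓝 0) := by
    simpa using ENNReal.Tendsto.const_mul ((tendsto_expENN_neg_mul hβ hε).add
      (tendsto_expENN_neg_mul hβ (half_pos hδ))) (Or.inr (ENNReal.natCast_ne_top n))
  filter_upwards [hn, hR.eventually_measure_le hβ 1 δ (half_pos hδ),
    hsmall.eventually (gt_mem_nhds one_pos)] with i hvisit hle hlt
  have := hR.isProbabilityMeasure i
  have hS : MeasurableSet {y | δ < R i y} :=
    measurableSet_lt measurable_const (hR.continuous i).measurable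
  have hlarge : μ i {y | δ < R i y} ≤ expENN (-β i * (δ / 2)) := by
    simpa only [sub_half] using hle _ hS fun y hy ↦ by rw [birkhoff_one]; exact le_of_lt hy
  by_contra! hcyl
  refine hlt.not_ge (((hR.isConformal i).one_le_mul_measure (hR.measurable i) (hR.transferOp_one i)
    ((measurableSet_cylOf c₀ k).union hS) (n := n) fun z ↦ ?_).trans ?_)
  · by_contra! hz
    obtain ⟨j, hj, hjk⟩ := hvisit z fun j hj ↦ not_lt.1 fun h ↦ hz j hj (Or.inr h)
    exact hz j hj (Or.inl hjk)
  · gcongr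
    exact (measure_union_le _ _).trans (by gcongr)

lemma exists_visit_of_birkhoff_lt (hR : IsZeroTemperatureFamily β R μ D s)
    (hlim : ∀ x, Tendsto (fun i ↦ R i x) l (𝓝 (Rp x))) (hvis : ZeroOrbitsVisit Rp c₀)
    (t : ℝ) (n m : ℕ) :
    ∃ k, ∀ᶠ i in l, ∀ y, birkhoff (R i) k y < t →
      ∃ j, n ≤ j ∧ j < k ∧ shift^[j] y ∈ cylOf c₀ m := by
  obtain ⟨N, hN⟩ := hvis.exists_uniform hR.equicontinuous hR.nonneg hR.isSummableMajorant hlim m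
  have hδ : (0 : ℝ) < 1 / (N + 1) := Nat.one_div_pos_of_nat
  obtain ⟨q, hq⟩ := exists_nat_gt (t / (1 / (N + 1)))
  refine ⟨n + N * q, hN.mono fun i hi y hy ↦ ?_⟩
  rw [birkhoff_add] at hy
  obtain ⟨w, hw, hwδ⟩ := exists_forall_le_of_birkhoff_lt (hR.nonneg i)
    (((le_add_of_nonneg_left (birkhoff_nonneg (hR.nonneg i) n y)).trans_lt hy).trans
      ((div_lt_iff₀ hδ).1 hq))
  obtain ⟨j, hj, hjm⟩ := hi _ hwδ
  rw [← Function.iterate_add_apply, ← Function.iterate_add_apply] at hjm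
  refine ⟨j + N * w + n, by omega, ?_, hjm⟩
  have := Nat.mul_le_mul_left N (Nat.succ_le_of_lt hw)
  rw [Nat.mul_succ] at this
  omega

/-- The points in question have their first `j` symbols in a finite set, so there are only finitely
many of them and pointwise convergence suffices. -/
lemma eventually_birkhoff_lt_add (hR : IsZeroTemperatureFamily β R μ D s)
    (hlim : ∀ x, Tendsto (fun i ↦ R i x) l (𝓝 (Rp x))) (c₀ : MarkovShift A) (t : ℝ) (k : ℕ)
    {ε : ℝ} (hε : 0 < ε) :
    ∀ᶠ i in l, ∀ j < k, ∀ u, shift^[j] u = c₀ → birkhoff (R i) j u ≤ t →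
      birkhoff Rp j u < birkhoff (R i) j u + ε := by
  rcases isEmpty_or_nonempty ι with _ | ⟨⟨i₀⟩⟩
  · exact .of_forall isEmptyElim
  have hfin := (hR.isSummableMajorant i₀).finite_setOf_le (-t)
  have hev : ∀ᶠ i in l, ∀ j ∈ Set.Iio k,
      ∀ u ∈ {u | shift^[j] u = c₀ ∧ ∀ i < j, u.1 i ∈ {a | -t ≤ s a}},
      birkhoff Rp j u < birkhoff (R i) j u + ε :=
    (eventually_all_finite (Set.finite_Iio k)).2 fun j _ ↦
      (eventually_all_finite (finite_setOf_shift_iterate_eq c₀ hfin j)).2 fun u _ ↦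
        ((tendsto_birkhoff hlim j u).add_const ε).eventually
          (lt_mem_nhds (lt_add_of_pos_right _ hε))
  filter_upwards [hev] with i hi j hj u huc hut
  refine hi j hj u ⟨huc, fun m hm ↦ ?_⟩
  have hs := (hR.isSummableMajorant i).2 (shift^[m] u)
  rw [shift_iterate_val_zero] at hs
  exact (neg_le_neg ((apply_shift_iterate_le_birkhoff (hR.nonneg i) hm u).trans hut)).trans hs

/-- A cheap orbit of length `k` visits a small cylinder around `c₀`; redirecting it to `c₀` at that
time changes its cost by little. -/
lemma exists_passageCost_sub_le_birkhoff (hR : IsZeroTemperatureFamily β R μ D s)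
    [l.NeBot] (hlim : ∀ x, Tendsto (fun i ↦ R i x) l (𝓝 (Rp x))) (hvis : ZeroOrbitsVisit Rp c₀)
    (x : MarkovShift A) (n : ℕ) {ε : ℝ} (hε : 0 < ε) :
    ∃ k, ∀ᶠ i in l, ∀ y ∈ cylOf x n, passageCost Rp c₀ x n - ε ≤ birkhoff (R i) k y := by
  obtain ⟨m, hm⟩ := ((tendsto_add_atTop_iff_nat 1).2 hR.tendsto_zero).eventually
    (gt_mem_nhds (half_pos hε)) |>.exists
  set t := passageCost Rp c₀ x n
  obtain ⟨k, hk⟩ := hR.exists_visit_of_birkhoff_lt hlim hvis t n (m + 1)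
  refine ⟨k, ?_⟩
  filter_upwards [hk, hR.eventually_birkhoff_lt_add hlim c₀ t k (half_pos hε)] with i hi hlt y hy
  by_contra! hyt
  obtain ⟨j, hnj, hjk, hj⟩ := hi y (hyt.trans_le (sub_le_self t hε.le))
  have hc₀ : c₀ ∈ cylOf (shift^[j] y) (m + 1) := cylOf_eq_of_mem hj ▸ mem_cylOf_self c₀ _
  have h₀ : y.1 j = c₀.1 0 := by rw [hc₀ 0 m.succ_pos, shift_iterate_val_zero]
  have hu := splice_mem_cylOf_add hc₀
  have hcost := abs_le.1 (hR.abs_birkhoff_sub_le i j (m + 1) m.succ_pos _ _ hu)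
  have hmono := birkhoff_monotone (hR.nonneg i) y hjk.le
  dsimp only at hmono
  have hpass : t ≤ birkhoff Rp j (splice y j c₀) := passageCost_le (hR.nonneg_of_tendsto hlim) hnj
    (cylOf_eq_of_mem hy ▸ cylOf_anti y (by omega) hu) (shift_iterate_splice h₀)
  linarith [hlt j hjk _ (shift_iterate_splice h₀) (by linarith)]

lemma eventually_measure_cylOf_le (hR : IsZeroTemperatureFamily β R μ D s) [l.NeBot]
    (hβ : Tendsto β l atTop) (hlim : ∀ x, Tendsto (fun i ↦ R i x) l (𝓝 (Rp x)))
    (hvis : ZeroOrbitsVisit Rp c₀) (x : MarkovShift A) (n : ℕ) {ε : ℝ} (hε : 0 < ε) :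
    ∀ᶠ i in l, μ i (cylOf x n) ≤ expENN (-β i * (passageCost Rp c₀ x n - ε)) := by
  obtain ⟨k, hk⟩ := hR.exists_passageCost_sub_le_birkhoff hlim hvis x n (half_pos hε)
  filter_upwards [hk, hR.eventually_measure_le hβ k _ (half_pos hε)] with i hi hle
  simpa only [sub_sub, add_halves] using hle _ (measurableSet_cylOf x n) hi

lemma eventually_le_measure_cylOf (hR : IsZeroTemperatureFamily β R μ D s)
    (hβ : Tendsto β l atTop) (hlim : ∀ x, Tendsto (fun i ↦ R i x) l (𝓝 (Rp x)))
    (hvis : ZeroOrbitsVisit Rp c₀) {k : ℕ} {F : Finset ℕ} (hF : ConnectsThrough A k F)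
    (x : MarkovShift A) (n : ℕ) {ε : ℝ} (hε : 0 < ε) :
    ∀ᶠ i in l, expENN (-β i * (passageCost Rp c₀ x n + ε)) ≤ μ i (cylOf x n) := by
  have hε₄ : 0 < ε / 4 := by positivity
  obtain ⟨j, hnj, y, hy, rfl, hyt⟩ := hF.exists_birkhoff_lt Rp c₀ x n hε₄
  obtain ⟨m, hm⟩ := ((tendsto_add_atTop_iff_nat 1).2 hR.tendsto_zero).eventually
    (gt_mem_nhds hε₄) |>.exists
  filter_upwards [hR.eventually_expENN_le_measure_cylOf hβ hlim hvis (m + 1) hε₄,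
    (tendsto_birkhoff hlim j y).eventually (gt_mem_nhds (lt_add_of_pos_right _ hε₄))]
    with i hvisit hcost
  have hβi := hR.pos i
  have hle := (hR.isConformal i).le_measure_cylOf_add (hR.measurable i) (x := y) (k := j) (n := m)
    (t := -β i * (birkhoff (R i) j y + D (m + 1))) fun z hz ↦ by
      rw [birkhoff_const_mul, neg_mul, neg_mul, neg_le_neg_iff]
      have := abs_le.1 (hR.abs_birkhoff_sub_le i j (m + 1) m.succ_pos _ _ hz)
      exact mul_le_mul_of_nonneg_left (by linarith) hβi.le
  calc expENN (-β i * (passageCost Rp (shift^[j] y) x n + ε))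
      ≤ expENN (-β i * (birkhoff (R i) j y + D (m + 1)) + -β i * (ε / 4)) := by
        rw [expENN_le_expENN]
        nlinarith
    _ ≤ expENN (-β i * (birkhoff (R i) j y + D (m + 1))) * μ i (cylOf (shift^[j] y) (m + 1)) := by
        rw [expENN_add]
        gcongr
    _ ≤ μ i (cylOf y n) := hle.trans (measure_mono (cylOf_anti y (by omega)))
    _ = μ i (cylOf x n) := by rw [cylOf_eq_of_mem hy]

lemma tendsto_log_measure_cylOf (hR : IsZeroTemperatureFamily β R μ D s) [l.NeBot]
    (hβ : Tendsto β l atTop) (hlim : ∀ x, Tendsto (fun i ↦ R i x) l (𝓝 (Rp x)))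
    (hvis : ZeroOrbitsVisit Rp c₀) (hmix : TopologicallyMixing A) {k : ℕ} {F : Finset ℕ}
    (hF : ConnectsThrough A k F) (x : MarkovShift A) (n : ℕ) :
    Tendsto (fun i ↦ 1 / β i * Real.log (μ i (cylOf x n)).toReal) l
      (𝓝 (-passageCost Rp c₀ x n)) := by
  rw [Metric.tendsto_nhds]
  intro ε hε
  filter_upwards [hR.eventually_le_measure_cylOf hβ hlim hvis hF x n (half_pos hε),
    hR.eventually_measure_cylOf_le hβ hlim hvis x n (half_pos hε)] with i hge hle
  have := hR.isProbabilityMeasure i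
  have h₀ := hR.measure_cylOf_ne_zero hmix i x n
  rw [expENN_neg_mul_le_iff (hR.pos i) h₀ (measure_ne_top _ _)] at hge
  rw [le_expENN_neg_mul_iff (hR.pos i) h₀ (measure_ne_top _ _)] at hle
  rw [Real.dist_eq, abs_lt]
  constructor <;> linarith

lemma log_measure_cylOf_ratio (hR : IsZeroTemperatureFamily β R μ D s)
    (hmix : TopologicallyMixing A) (i : ι) (x : MarkovShift A) (n : ℕ) :
    1 / β i * Real.log ((μ i (cylOf (shift x) n)).toReal / (μ i (cylOf x (n + 1))).toReal) =
      1 / β i * Real.log (μ i (cylOf (shift x) n)).toReal -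
        1 / β i * Real.log (μ i (cylOf x (n + 1))).toReal := by
  have := hR.isProbabilityMeasure i
  have hne (y : MarkovShift A) (m : ℕ) : (μ i (cylOf y m)).toReal ≠ 0 :=
    (ENNReal.toReal_pos (hR.measure_cylOf_ne_zero hmix i y m) (measure_ne_top _ _)).ne'
  rw [Real.log_div (hne _ _) (hne _ _), mul_sub]

lemma tendsto_log_ratio (hR : IsZeroTemperatureFamily β R μ D s) [l.NeBot]
    (hβ : Tendsto β l atTop) (hlim : ∀ x, Tendsto (fun i ↦ R i x) l (𝓝 (Rp x)))
    (hvis : ZeroOrbitsVisit Rp c₀) (hmix : TopologicallyMixing A) {k : ℕ} {F : Finset ℕ}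
    (hF : ConnectsThrough A k F) (x : MarkovShift A) (n : ℕ) :
    Tendsto (fun i ↦ 1 / β i * Real.log
        ((μ i (cylOf (shift x) n)).toReal / (μ i (cylOf x (n + 1))).toReal)) l
      (𝓝 (passageCost Rp c₀ x (n + 1) - passageCost Rp c₀ (shift x) n)) := by
  simp_rw [hR.log_measure_cylOf_ratio hmix]
  convert (hR.tendsto_log_measure_cylOf hβ hlim hvis hmix hF (shift x) n).sub
    (hR.tendsto_log_measure_cylOf hβ hlim hvis hmix hF x (n + 1)) using 2
  ring

lemma abs_log_ratio_sub_le (hR : IsZeroTemperatureFamily β R μ D s) (hmix : TopologicallyMixing A)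
    (i : ι) (x : MarkovShift A) {n : ℕ} (hn : 1 ≤ n) :
    |1 / β i * Real.log ((μ i (cylOf (shift x) n)).toReal / (μ i (cylOf x (n + 1))).toReal) -
      R i x| ≤ D n := by
  obtain ⟨n, rfl⟩ := Nat.exists_eq_add_of_le' hn
  have := hR.isProbabilityMeasure i
  have hβi := hR.pos i
  have hdist (y) (hy : y ∈ cylOf x (1 + (n + 1))) := abs_le.1 (hR.abs_sub_le i hn hy)
  have hge := (hR.isConformal i).le_measure_cylOf_add (hR.measurable i) (k := 1)
    (t := -β i * (R i x + D (n + 1))) fun y hy ↦ by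
      rw [birkhoff_one]
      nlinarith [hdist y hy]
  have hle := (hR.isConformal i).measure_cylOf_add_le (hR.measurable i) (k := 1)
    (t := -β i * (R i x - D (n + 1))) fun y hy ↦ by
      rw [birkhoff_one]
      nlinarith [hdist y hy]
  rw [Function.iterate_one, add_comm 1 (n + 1)] at hge hle
  have h₀ := hR.measure_cylOf_ne_zero hmix i (shift x) (n + 1)
  have h₁ := hR.measure_cylOf_ne_zero hmix i x (n + 1 + 1)
  have hdiv := ENNReal.div_ne_zero.2 ⟨h₁, measure_ne_top (μ i) (cylOf (shift x) (n + 1))⟩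
  have hdiv' := ENNReal.div_ne_top (measure_ne_top (μ i) (cylOf x (n + 1 + 1))) h₀
  rw [← ENNReal.le_div_iff_mul_le (.inl h₀) (.inl (measure_ne_top _ _)),
    expENN_neg_mul_le_iff hβi hdiv hdiv'] at hge
  rw [← ENNReal.div_le_iff_le_mul (.inl h₀) (.inl (measure_ne_top _ _)),
    le_expENN_neg_mul_iff hβi hdiv hdiv'] at hle
  rw [← inv_div (ENNReal.toReal _), Real.log_inv, ← ENNReal.toReal_div, mul_neg, abs_le]
  constructor <;> linarith

lemma tendsto_passageCost_sub (hR : IsZeroTemperatureFamily β R μ D s) [l.NeBot]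
    (hβ : Tendsto β l atTop) (hlim : ∀ x, Tendsto (fun i ↦ R i x) l (𝓝 (Rp x)))
    (hvis : ZeroOrbitsVisit Rp c₀) (hmix : TopologicallyMixing A) {k : ℕ} {F : Finset ℕ}
    (hF : ConnectsThrough A k F) (x : MarkovShift A) :
    Tendsto (fun n ↦ passageCost Rp c₀ x (n + 1) - passageCost Rp c₀ (shift x) n) atTop
      (𝓝 (Rp x)) := by
  rw [tendsto_iff_dist_tendsto_zero]
  refine squeeze_zero' (.of_forall fun n ↦ dist_nonneg) ?_ hR.tendsto_zero
  filter_upwards [eventually_ge_atTop 1] with n hn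
  exact le_of_tendsto' ((hR.tendsto_log_ratio hβ hlim hvis hmix hF x n).sub (hlim x)).abs
    fun i ↦ hR.abs_log_ratio_sub_le hmix i x hn

end IsZeroTemperatureFamily

end MeasureAsymptotics

section RPFFamily

variable {ι : Type*} {l : Filter ι} {β p : ι → ℝ} {f V : MarkovShift A → ℝ}
  {W : ι → MarkovShift A → ℝ} {ν : ι → Measure (MarkovShift A)} {s : ℕ → ℝ}

lemma IsCalibratedSubaction.tendsto_mf (hV : IsCalibratedSubaction f V)
    (hs : IsSummableMajorant f s) (hβ₁ : ∀ i, 1 ≤ β i) (hβ : Tendsto β l atTop)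
    (hW : ∀ i, IsLogRPF f (β i) (p i) (W i) (ν i)) : Tendsto p l (𝓝 (mf f)) := by
  obtain ⟨L, hL⟩ := hV.exists_le_mf_add hs
  refine tendsto_of_tendsto_of_tendsto_of_le_of_le tendsto_const_nhds
    (h := fun i ↦ mf f + L / β i) ?_ (fun i ↦ (hW i).mf_le (zero_lt_one.trans_le (hβ₁ i)) hV)
    fun i ↦ hL _ _ _ _ (hβ₁ i) (hW i)
  simpa using (hβ.const_div_atTop L).const_add (mf f)

lemma IsCalibratedSubaction.exists_isZeroTemperatureFamily_cost (hV : IsCalibratedSubaction f V)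
    (hf : SatisfiesWalters f) (hf₁ : Var1Finite f) (hmix : TopologicallyMixing A) {k : ℕ}
    {F : Finset ℕ} (hF : ConnectsThrough A k F) {a₀ : ℕ} (ha₀ : a₀ ∈ F) (hadm : Admissible A a₀)
    (hs : IsSummableMajorant f s) {μmax : Measure (MarkovShift A)}
    (huniq : ∀ ν', IsMaximizing f ν' → ν' = μmax) {c₀ : MarkovShift A} (hc₀ : c₀ ∈ msupport μmax)
    (hβ₁ : ∀ i, 1 ≤ β i) (hβ : Tendsto β l atTop)
    (hW : ∀ i, IsLogRPF f (β i) (p i) (W i) (ν i)) :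
    ∃ D s', IsZeroTemperatureFamily β (fun i ↦ cost f (W i) (p i))
        (fun i ↦ (ν i).withDensity fun x ↦ expENN (β i * W i x)) D s' ∧
      ∀ x, Tendsto (fun i ↦ cost f (W i) (p i) x) l (𝓝 (cost f V (mf f) x)) := by
  have hβ₀ (i) : 0 < β i := zero_lt_one.trans_le (hβ₁ i)
  obtain ⟨L, hL⟩ := hV.exists_le_mf_add hs
  have hp (i) : p i ≤ mf f + |L| := (hL _ _ _ _ (hβ₁ i) (hW i)).trans <| by
    gcongr
    exact (div_le_div_of_nonneg_right (le_abs_self L) (hβ₀ i).le).trans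
      (div_le_self (abs_nonneg L) (hβ₁ i))
  obtain ⟨C, hC⟩ := exists_forall_isLogRPF_sub_le hf hf₁ hmix hF ha₀ hadm (mf f + |L|)
  have hWC (i x y) : W i x - W i y ≤ C := hC _ _ _ _ (hβ₁ i) (hp i) (hW i) y x
  have hR := isZeroTemperatureFamily_cost hf hmix hs hβ₁ hW hWC fun i ↦ (hW i).mf_le (hβ₀ i) hV
  exact ⟨_, _, hR, hR.tendsto_cost hβ hWC
    (fun i _ hk _ _ ↦ (hW i).abs_sub_le (hβ₀ i) hf hmix hk) hf.2
    (hV.tendsto_mf hs hβ₁ hβ hW) hf.continuous hs huniq hc₀ hV⟩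

end RPFFamily

end MarkovShift

namespace MarkovShift

/-- `lim_n lim_β (1/β) log (μ_β[x₁ … x_n] / μ_β[x₀ … x_n]) = R₊(x)`, where
`R₊ = -f - V + V∘σ + m(f)` for a bounded calibrated sub-action `V`. -/
theorem double_limit_of_cylinder_ratio
    (A : ℕ → ℕ → Bool)
    (hmix : TopologicallyMixing A)
    (hbip : FinitelyPrimitive A)
    (f : MarkovShift A → ℝ)
    (hWalters : SatisfiesWalters f)
    (hVar1 : Var1Finite f)
    (P : ℝ → ℝ)
    (hPfin : HasGurevichPressure f (P 1))
    (μmax : Measure (MarkovShift A))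
    (hmax : IsMaximizing f μmax)
    (huniq : ∀ ν', IsMaximizing f ν' → ν' = μmax)
    (h : ℝ → MarkovShift A → ℝ)
    (ν : ℝ → Measure (MarkovShift A))
    (hRPF : ∀ β : ℝ, 1 < β → IsRPF (fun x => β * f x) (P β) (h β) (ν β))
    (V : MarkovShift A → ℝ)
    (hV : IsCalibratedSubaction f V) :
    ∀ x : MarkovShift A, ∃ Lf : ℕ → ℝ,
      (∀ n : ℕ, 1 ≤ n → Tendsto
          (fun β : ℝ => (1 / β) * Real.log
            ((((gibbs (h β) (ν β)) (cylOf (shift x) n)).toReal) /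
              (((gibbs (h β) (ν β)) (cylOf x (n + 1))).toReal)))
          atTop (𝓝 (Lf n))) ∧
        Tendsto Lf atTop (𝓝 (-f x - V x + V (shift x) + mf f)) := by
  intro x
  obtain ⟨k, F, hx₀, hF⟩ := hbip.exists_connectsThrough (x.1 0)
  have hadm := admissible_val x 0
  obtain ⟨s, hs⟩ := hPfin.exists_isSummableMajorant hVar1 hF hx₀ hadm
  have hcont : Continuous f := hWalters.continuous
  have : IsProbabilityMeasure μmax := hmax.1.1
  obtain ⟨c₀, hc₀⟩ := exists_mem_msupport μmax
  have hpos (β : Set.Ioi (1 : ℝ)) : 0 < β.1 := zero_lt_one.trans β.2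
  have hβ : Tendsto ((↑) : Set.Ioi (1 : ℝ) → ℝ) atTop atTop :=
    tendsto_comp_val_Ioi_atTop.2 tendsto_id
  obtain ⟨D, s', hR, hlim⟩ := hV.exists_isZeroTemperatureFamily_cost hWalters hVar1 hmix hF hx₀
    hadm hs huniq hc₀ (fun β ↦ β.2.le) hβ fun β ↦ (hRPF β β.2).isLogRPF (hpos β) hcont hs
  simp_rw [← fun β : Set.Ioi (1 : ℝ) ↦
    gibbs_eq_withDensity (ν := ν β) (hpos β).ne' (hRPF β β.2).2.1] at hR
  have hvis := hV.zeroOrbitsVisit hcont hs huniq hc₀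
  exact ⟨_, fun n _ ↦ (tendsto_comp_val_Ioi_atTop (a := 1)).1
      (hR.tendsto_log_ratio hβ hlim hvis hmix hF x n),
    hR.tendsto_passageCost_sub hβ hlim hvis hmix hF x⟩

end MarkovShift
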